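/- (Theorem 14, first claim.) For s > 0, let 𝒩_A(s) be the number of conjugacy classes of PSL₂(ℤ) consisting of primitive hyperbolic elements γ with translation length ℓ(γ) = 2·arcosh(|tr γ|/2) ≤ s that contain an element ambiguous of the first kind or an element ambiguous of the second kind. Then, as s → +∞, 𝒩_A(s) = (3/(4π²)) s² e^{s/2} + O(s e^{s/2}). -/

import Mathlib

open Matrix
open scoped MatrixGroups

instance : Fact (Even (Fintype.card (Fin 2))) := ⟨⟨1, rfl⟩⟩

/-- The determinant `-1` integer matrix `W = [[1, 0], [0, -1]]`. -/
noncomputable def Wmat : Matrix (Fin 2) (Fin 2) ℤ := !![1, 0; 0, -1]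

/-- The determinant `-1` integer matrix `W₁ = [[1, 0], [1, -1]]`. -/
noncomputable def W1mat : Matrix (Fin 2) (Fin 2) ℤ := !![1, 0; 1, -1]

/-- A lift `A ∈ SL₂(ℤ)` is ambiguous of the first kind if `W·A·W⁻¹ = ±A⁻¹`. -/
def Amb1 (A : SL(2, ℤ)) : Prop :=
  Wmat * (A : Matrix (Fin 2) (Fin 2) ℤ) * Wmat⁻¹ = ((A⁻¹ : SL(2, ℤ)) : Matrix (Fin 2) (Fin 2) ℤ) ∨
  Wmat * (A : Matrix (Fin 2) (Fin 2) ℤ) * Wmat⁻¹ = -((A⁻¹ : SL(2, ℤ)) : Matrix (Fin 2) (Fin 2) ℤ)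

/-- A lift `A ∈ SL₂(ℤ)` is ambiguous of the second kind if `W₁·A·W₁⁻¹ = ±A⁻¹`. -/
def Amb2 (A : SL(2, ℤ)) : Prop :=
  W1mat * (A : Matrix (Fin 2) (Fin 2) ℤ) * W1mat⁻¹ = ((A⁻¹ : SL(2, ℤ)) : Matrix (Fin 2) (Fin 2) ℤ) ∨
  W1mat * (A : Matrix (Fin 2) (Fin 2) ℤ) * W1mat⁻¹ = -((A⁻¹ : SL(2, ℤ)) : Matrix (Fin 2) (Fin 2) ℤ)

/-- The subgroup `{±1}` of `SL₂(ℤ)`. -/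
def pmOne : Subgroup SL(2, ℤ) := Subgroup.zpowers (-1)

instance : pmOne.Normal := by
  constructor
  intro x hx g
  obtain ⟨n, rfl⟩ := Subgroup.mem_zpowers_iff.mp hx
  have hc : Commute g (-1 : SL(2, ℤ)) := by
    show g * (-1) = (-1) * g
    apply Subtype.ext
    show ((g * (-1) : SL(2, ℤ)) : Matrix (Fin 2) (Fin 2) ℤ)
        = (((-1) * g : SL(2, ℤ)) : Matrix (Fin 2) (Fin 2) ℤ)
    simp
  have hcn : Commute g ((-1 : SL(2, ℤ)) ^ n) := hc.zpow_right n
  have : g * (-1 : SL(2, ℤ)) ^ n * g⁻¹ = (-1) ^ n := by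
    rw [hcn.eq, mul_assoc, mul_inv_cancel, mul_one]
  rw [this]
  exact Subgroup.zpow_mem _ (Subgroup.mem_zpowers _) n

/-- `PSL₂(ℤ) = SL₂(ℤ)/{±1}`. -/
abbrev PSL2Z := SL(2, ℤ) ⧸ pmOne

/-- An element of `PSL₂(ℤ)` is hyperbolic if the absolute value of the trace of a lift
to `SL₂(ℤ)` is greater than `2`. -/
def IsHyp (γ : PSL2Z) : Prop :=
  ∃ A : SL(2, ℤ), (QuotientGroup.mk A : PSL2Z) = γ ∧
    2 < |Matrix.trace (A : Matrix (Fin 2) (Fin 2) ℤ)|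

/-- An element of `PSL₂(ℤ)` is primitive if it is not a proper power. -/
def IsPrim (γ : PSL2Z) : Prop := ¬ ∃ (δ : PSL2Z) (n : ℕ), 2 ≤ n ∧ δ ^ n = γ

/-- An element of `PSL₂(ℤ)` is ambiguous of the first kind if it has a lift which is. -/
def AmbFst (γ : PSL2Z) : Prop :=
  ∃ A : SL(2, ℤ), (QuotientGroup.mk A : PSL2Z) = γ ∧ Amb1 A

/-- An element of `PSL₂(ℤ)` is ambiguous of the second kind if it has a lift which is. -/
def AmbSnd (γ : PSL2Z) : Prop :=
  ∃ A : SL(2, ℤ), (QuotientGroup.mk A : PSL2Z) = γ ∧ Amb2 A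

/-- The inverse hyperbolic cosine. -/
noncomputable def arcosh (x : ℝ) : ℝ := Real.log (x + Real.sqrt (x ^ 2 - 1))

/-- The translation length `ℓ(γ) = 2 arcosh(|tr γ|/2)` of `γ ∈ PSL₂(ℤ)` is at most `s`. -/
def TransLenLE (γ : PSL2Z) (s : ℝ) : Prop :=
  ∃ A : SL(2, ℤ), (QuotientGroup.mk A : PSL2Z) = γ ∧
    2 * arcosh (((|Matrix.trace (A : Matrix (Fin 2) (Fin 2) ℤ)| : ℤ) : ℝ) / 2) ≤ s

/-- The number of conjugacy classes of primitive hyperbolic elements of `PSL₂(ℤ)` with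
translation length at most `s` containing an element ambiguous of the first or of the
second kind. -/
noncomputable def NAmb (s : ℝ) : ℕ :=
  {C : ConjClasses PSL2Z | ∃ γ : PSL2Z, ConjClasses.mk γ = C ∧
      IsPrim γ ∧ IsHyp γ ∧ TransLenLE γ s ∧
      ∃ δ : PSL2Z, IsConj γ δ ∧ (AmbFst δ ∨ AmbSnd δ)}.ncard

/-! ### Part A: analytic estimates -/

lemma pa_harm_lo (M u : ℕ) (hu : 1 ≤ u) (hM : 1 ≤ M) :
    Real.log M - Real.log u ≤ ∑ v ∈ Finset.Icc 1 (M / u), (1 : ℝ) / v := by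
  have h := log_le_harmonic_floor ((M : ℝ) / u) (by positivity)
  rw [Nat.floor_div_eq_div, harmonic_eq_sum_Icc, Real.log_div (by positivity) (by positivity)] at h
  push_cast at h
  simpa [one_div] using h

lemma pa_harm_hi (M u : ℕ) (hu : 1 ≤ u) (hM : u ≤ M) :
    ∑ v ∈ Finset.Icc 1 (M / u), (1 : ℝ) / v ≤ 1 + (Real.log M - Real.log u) := by
  have hu' : (0 : ℝ) < u := by exact_mod_cast hu
  have hM' : (0 : ℝ) < M := by exact_mod_cast (lt_of_lt_of_le hu hM)
  have h := harmonic_floor_le_one_add_log ((M : ℝ) / u) (by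
    rw [le_div_iff₀ hu']; simpa using (by exact_mod_cast hM : (u : ℝ) ≤ M))
  rw [Nat.floor_div_eq_div, harmonic_eq_sum_Icc, Real.log_div (by positivity) (by positivity)] at h
  push_cast at h
  simpa [one_div] using h

lemma pa_delta (M : ℕ) (hM : 1 ≤ M) :
    1 / ((M : ℝ) + 1) ≤ Real.log ((M : ℝ) + 1) - Real.log M ∧
      Real.log ((M : ℝ) + 1) - Real.log M ≤ 1 / (M : ℝ) := by
  have hM' : (0 : ℝ) < M := by exact_mod_cast hM
  rw [← Real.log_div (by positivity) (by positivity)]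
  constructor
  · have := Real.one_sub_inv_le_log_of_pos (x := ((M : ℝ) + 1) / M) (by positivity)
    refine le_trans (le_of_eq ?_) this
    field_simp
    ring
  · have := Real.log_le_sub_one_of_pos (x := ((M : ℝ) + 1) / M) (by positivity)
    refine le_trans this (le_of_eq ?_)
    field_simp
    ring

lemma pa_logsum (M : ℕ) (hM : 1 ≤ M) :
    ∑ u ∈ Finset.Icc 1 M, Real.log u / u ≤ Real.log M ^ 2 / 2 + 1 - 1 / M ∧
    Real.log M ^ 2 / 2 - Real.log M ≤ ∑ u ∈ Finset.Icc 1 M, Real.log u / u := by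
  induction M, hM using Nat.le_induction with
  | base => simp
  | succ M hM ih =>
    rw [Finset.sum_Icc_succ_top (by omega)]
    have hM' : (1 : ℝ) ≤ M := by exact_mod_cast hM
    obtain ⟨d1, d2⟩ := pa_delta M hM
    have hl0 : 0 ≤ Real.log M := Real.log_nonneg hM'
    have hl1 : Real.log ((M : ℝ) + 1) ≤ M := by
      have := Real.log_le_sub_one_of_pos (x := (M : ℝ) + 1) (by positivity)
      linarith
    push_cast
    set L := Real.log M
    set L' := Real.log ((M : ℝ) + 1)
    have hL' : 0 ≤ L' := by
      have : 0 < 1 / ((M : ℝ) + 1) := by positivity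
      linarith
    have e1 : L' / ((M : ℝ) + 1) = L' * (1 / ((M : ℝ) + 1)) := by ring
    have e3 : 1 / (M : ℝ) - 1 / ((M : ℝ) + 1) = 1 / (M : ℝ) * (1 / ((M : ℝ) + 1)) := by
      field_simp; ring
    have p1 : 0 < 1 / (M : ℝ) := by positivity
    have p2 : 0 < 1 / ((M : ℝ) + 1) := by positivity
    constructor
    · have h1 : L' * (1 / ((M : ℝ) + 1)) ≤ L' * (L' - L) := mul_le_mul_of_nonneg_left d1 hL'
      have h2 : (L' - L) ^ 2 ≤ (1 / (M : ℝ)) ^ 2 := by gcongr; linarith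
      have h3 : (1 / (M : ℝ)) ≤ 2 * (1 / ((M : ℝ) + 1)) := by
        rw [mul_one_div, div_le_div_iff₀ (by positivity) (by positivity)]; linarith
      have h4 : (1 / (M : ℝ)) ^ 2 ≤ 2 * (1 / (M : ℝ) * (1 / ((M : ℝ) + 1))) := by
        nlinarith
      rw [e1]
      nlinarith [ih.1]
    · have h1 : L' * (L' - L) ≤ L' * (1 / (M : ℝ)) := mul_le_mul_of_nonneg_left d2 hL'
      have h2 : L' * (1 / (M : ℝ)) - L' * (1 / ((M : ℝ) + 1)) ≤ 1 / ((M : ℝ) + 1) := by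
        rw [← mul_sub, e3]
        have : L' * (1 / (M : ℝ)) ≤ 1 := by
          rw [mul_one_div, div_le_one (by positivity)]; exact hl1
        nlinarith
      rw [e1]
      nlinarith [ih.2, sq_nonneg (L' - L)]

/-- weighted divisor sum -/
noncomputable def Dsum (M : ℕ) : ℝ :=
  ∑ u ∈ Finset.Icc 1 M, (1 / (u : ℝ)) * ∑ v ∈ Finset.Icc 1 (M / u), (1 : ℝ) / v

lemma pa_D (M : ℕ) (hM : 1 ≤ M) :
    |Dsum M - Real.log M ^ 2 / 2| ≤ 3 * (1 + Real.log M) := by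
  have hM' : (1 : ℝ) ≤ M := by exact_mod_cast hM
  have hl0 : 0 ≤ Real.log M := Real.log_nonneg hM'
  have hH1 := pa_harm_lo M 1 le_rfl hM
  have hH2 := pa_harm_hi M 1 le_rfl hM
  simp only [Nat.div_one, Nat.cast_one, Real.log_one, sub_zero] at hH1 hH2
  set H := ∑ v ∈ Finset.Icc 1 M, (1 : ℝ) / v with hH
  obtain ⟨s1, s2⟩ := pa_logsum M hM
  set S := ∑ u ∈ Finset.Icc 1 M, Real.log u / u with hS
  have hlo : Real.log M * H - S ≤ Dsum M := by
    rw [hH, hS, Finset.mul_sum, ← Finset.sum_sub_distrib, Dsum]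
    refine Finset.sum_le_sum fun u hu => ?_
    rw [Finset.mem_Icc] at hu
    have := pa_harm_lo M u hu.1 hM
    have hu0 : (0 : ℝ) < u := by exact_mod_cast hu.1
    have h3 := mul_le_mul_of_nonneg_left this (by positivity : (0 : ℝ) ≤ 1 / u)
    refine le_trans (le_of_eq ?_) h3
    ring
  have hhi : Dsum M ≤ (1 + Real.log M) * H - S := by
    rw [hH, hS, Finset.mul_sum, ← Finset.sum_sub_distrib, Dsum]
    refine Finset.sum_le_sum fun u hu => ?_
    rw [Finset.mem_Icc] at hu
    have := pa_harm_hi M u hu.1 hu.2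
    have hu0 : (0 : ℝ) < u := by exact_mod_cast hu.1
    have h3 := mul_le_mul_of_nonneg_left this (by positivity : (0 : ℝ) ≤ 1 / u)
    refine le_trans h3 (le_of_eq ?_)
    ring
  have hq : 0 < 1 / (M : ℝ) := by positivity
  rw [abs_le]
  constructor <;> nlinarith

lemma pa_D0 : Dsum 0 = 0 := by simp [Dsum]

lemma pa_Dg (N g : ℕ) (hN : 1 ≤ N) (hg : 1 ≤ g) :
    |Dsum (N / g ^ 2) - Real.log N ^ 2 / 2| ≤ 10 * (1 + Real.log N) * (1 + Real.log g) := by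
  have hN' : (1 : ℝ) ≤ N := by exact_mod_cast hN
  have hl0 : 0 ≤ Real.log N := Real.log_nonneg hN'
  have hg' : (1 : ℝ) ≤ g := by exact_mod_cast hg
  have hg0 : 0 ≤ Real.log g := Real.log_nonneg hg'
  by_cases h : g ^ 2 ≤ N
  · set M := N / g ^ 2 with hMdef
    have hM : 1 ≤ M := (Nat.one_le_div_iff (by positivity)).2 h
    have hM' : (1 : ℝ) ≤ M := by exact_mod_cast hM
    have hD := pa_D M hM
    have hle : M ≤ N := Nat.div_le_self _ _
    have hlM : Real.log M ≤ Real.log N := Real.log_le_log (by positivity) (by exact_mod_cast hle)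
    have hlM0 : 0 ≤ Real.log M := Real.log_nonneg hM'
    have hup : (N : ℝ) ≤ 2 * M * g ^ 2 := by
      have : N < (M + 1) * g ^ 2 := by
        have := Nat.lt_div_mul_add (a := N) (b := g ^ 2) (by positivity)
        rw [← hMdef] at this
        nlinarith
      have h2 : N ≤ 2 * M * g ^ 2 := by nlinarith [Nat.zero_le (g ^ 2)]
      exact_mod_cast h2
    have hlup : Real.log N ≤ 1 + Real.log M + 2 * Real.log g := by
      have h1 := Real.log_le_log (by positivity) hup
      rw [Real.log_mul (by positivity) (by positivity), Real.log_mul (by positivity) (by positivity),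
        Real.log_pow] at h1
      have := Real.log_two_lt_d9
      push_cast at h1
      linarith
    rw [abs_le] at hD ⊢
    have hp : 0 ≤ Real.log N * Real.log g := by positivity
    constructor <;> nlinarith
  · have : N / g ^ 2 = 0 := Nat.div_eq_of_lt (by omega)
    rw [this, pa_D0]
    have hl : Real.log N ≤ 2 * Real.log g := by
      have h1 : (N : ℝ) ≤ (g : ℝ) ^ 2 := by exact_mod_cast (by omega : N ≤ g ^ 2)
      have := Real.log_le_log (by positivity) h1
      rwa [Real.log_pow] at this
    rw [abs_le]
    have hp : 0 ≤ Real.log N * Real.log g := by positivity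
    constructor <;> nlinarith

/-- number of ordered coprime factorizations -/
def cfac (n : ℕ) : ℕ := ((Nat.divisorsAntidiagonal n).filter (fun p => Nat.Coprime p.1 p.2)).card

lemma pa_moebius_coprime (N u v : ℕ) (hu : 1 ≤ u) (huN : u ≤ N) :
    (if Nat.Coprime u v then (1 : ℝ) else 0) =
      ∑ g ∈ Finset.Icc 1 N, if g ∣ u ∧ g ∣ v then (ArithmeticFunction.moebius g : ℝ) else 0 := by
  have h1 : (∑ g ∈ (Nat.gcd u v).divisors, (ArithmeticFunction.moebius g : ℤ)) =
      if Nat.gcd u v = 1 then 1 else 0 := by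
    rw [← ArithmeticFunction.coe_mul_zeta_apply, ArithmeticFunction.moebius_mul_coe_zeta,
      ArithmeticFunction.one_apply]
  have hg0 : Nat.gcd u v ≠ 0 := by
    have := Nat.gcd_pos_of_pos_left v hu; omega
  have h2 : (Finset.Icc 1 N).filter (fun g => g ∣ u ∧ g ∣ v) = (Nat.gcd u v).divisors := by
    ext g
    simp only [Finset.mem_filter, Finset.mem_Icc, Nat.mem_divisors, Nat.dvd_gcd_iff]
    constructor
    · rintro ⟨-, h⟩; exact ⟨h, hg0⟩
    · rintro ⟨h, -⟩
      exact ⟨⟨Nat.pos_of_dvd_of_pos h.1 hu, (Nat.le_of_dvd hu h.1).trans huN⟩, h⟩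
  rw [← Finset.sum_filter, h2]
  unfold Nat.Coprime
  have h3 := congrArg (fun z : ℤ => (z : ℝ)) h1
  simp only [Int.cast_sum, Int.cast_ite, Int.cast_one, Int.cast_zero] at h3
  exact h3.symm

lemma pa_reindex {E : Type*} [AddCommMonoid E] (N g : ℕ) (hg : 1 ≤ g) (f : ℕ → E) :
    (∑ u ∈ Finset.Icc 1 N, if g ∣ u then f u else 0) = ∑ u ∈ Finset.Icc 1 (N / g), f (g * u) := by
  rw [← Finset.sum_filter]
  symm
  apply Finset.sum_bij (fun u _ => g * u)
  · intro u hu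
    simp only [Finset.mem_filter, Finset.mem_Icc] at hu ⊢
    refine ⟨⟨Nat.mul_pos hg hu.1, ?_⟩, dvd_mul_right _ _⟩
    have := (Nat.le_div_iff_mul_le hg).1 hu.2
    linarith
  · intro u _ u' _ h
    exact Nat.eq_of_mul_eq_mul_left hg h
  · intro u hu
    simp only [Finset.mem_filter, Finset.mem_Icc] at hu
    obtain ⟨⟨h1, h2⟩, k, rfl⟩ := hu
    refine ⟨k, ?_, rfl⟩
    simp only [Finset.mem_Icc]
    refine ⟨Nat.pos_of_ne_zero (by rintro rfl; simp at h1), (Nat.le_div_iff_mul_le hg).2 (by linarith)⟩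
  · intro u _; rfl

lemma pa_D_box (M K : ℕ) (hK : M ≤ K) :
    Dsum M = ∑ u ∈ Finset.Icc 1 K, ∑ v ∈ Finset.Icc 1 K,
      if u * v ≤ M then (1 / ((u : ℝ) * v)) else 0 := by
  have hsub : Finset.Icc 1 M ⊆ Finset.Icc 1 K := Finset.Icc_subset_Icc le_rfl hK
  rw [Dsum, ← Finset.sum_subset hsub]
  · refine Finset.sum_congr rfl fun u hu => ?_
    rw [Finset.mem_Icc] at hu
    rw [Finset.mul_sum, ← Finset.sum_filter]
    have : (Finset.Icc 1 K).filter (fun v => u * v ≤ M) = Finset.Icc 1 (M / u) := by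
      ext v
      simp only [Finset.mem_filter, Finset.mem_Icc, Nat.le_div_iff_mul_le hu.1]
      constructor
      · rintro ⟨⟨a, b⟩, c⟩; exact ⟨a, by linarith⟩
      · rintro ⟨a, b⟩; exact ⟨⟨a, by nlinarith⟩, by linarith⟩
    rw [this]
    refine Finset.sum_congr rfl fun v _ => ?_
    rw [one_div_mul_one_div]
  · intro u hu hu'
    simp only [Finset.mem_Icc] at hu hu'
    refine Finset.sum_eq_zero fun v hv => ?_
    rw [Finset.mem_Icc] at hv
    rw [if_neg]
    have : M < u := by omega
    nlinarith

noncomputable def Csum (N : ℕ) : ℝ := ∑ n ∈ Finset.Icc 1 N, (cfac n : ℝ) / n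

lemma pa_cfac (n N : ℕ) (hn : 1 ≤ n) (hN : n ≤ N) : (cfac n : ℝ) =
    ∑ u ∈ Finset.Icc 1 N, ∑ v ∈ Finset.Icc 1 N, if u * v = n ∧ Nat.Coprime u v then (1 : ℝ) else 0 := by
  rw [← Finset.sum_product', ← Finset.sum_filter, cfac]
  simp only [Finset.sum_const, nsmul_eq_mul, mul_one]
  congr 2
  ext ⟨u, v⟩
  simp only [Finset.mem_filter, Nat.mem_divisorsAntidiagonal, Finset.mem_product, Finset.mem_Icc]
  constructor
  · rintro ⟨⟨h, h0⟩, hc⟩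
    have hu : 0 < u := Nat.pos_of_ne_zero (by rintro rfl; simp at h; omega)
    have hv : 0 < v := Nat.pos_of_ne_zero (by rintro rfl; simp at h; omega)
    exact ⟨⟨⟨hu, by nlinarith⟩, hv, by nlinarith⟩, h, hc⟩
  · rintro ⟨-, h, hc⟩; exact ⟨⟨h, by omega⟩, hc⟩

lemma pa_C_box (N : ℕ) : Csum N = ∑ u ∈ Finset.Icc 1 N, ∑ v ∈ Finset.Icc 1 N,
      (if u * v ≤ N then (1 / ((u : ℝ) * v)) else 0) * (if Nat.Coprime u v then (1 : ℝ) else 0) := by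
  have : Csum N = ∑ n ∈ Finset.Icc 1 N, ∑ u ∈ Finset.Icc 1 N, ∑ v ∈ Finset.Icc 1 N,
      if u * v = n ∧ Nat.Coprime u v then (1 / (n : ℝ)) else 0 := by
    refine Finset.sum_congr rfl fun n hn => ?_
    rw [Finset.mem_Icc] at hn
    rw [pa_cfac n N hn.1 hn.2, Finset.sum_div]
    refine Finset.sum_congr rfl fun u _ => ?_
    rw [Finset.sum_div]
    refine Finset.sum_congr rfl fun v _ => ?_
    split_ifs <;> simp
  rw [this, Finset.sum_comm]
  refine Finset.sum_congr rfl fun u hu => ?_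
  rw [Finset.sum_comm]
  refine Finset.sum_congr rfl fun v hv => ?_
  rw [Finset.mem_Icc] at hu hv
  by_cases hc : Nat.Coprime u v
  · have hc' : (Nat.Coprime u v) = True := eq_true hc
    simp only [hc', and_true, if_true, mul_one]
    rw [Finset.sum_ite_eq]
    have : 1 ≤ u * v := Nat.mul_pos hu.1 hv.1
    by_cases h : u * v ≤ N <;> simp [Finset.mem_Icc, this, h]
  · simp [hc]

lemma pa_C_eq (N : ℕ) : Csum N = ∑ g ∈ Finset.Icc 1 N,
    (ArithmeticFunction.moebius g : ℝ) / (g : ℝ) ^ 2 * Dsum (N / g ^ 2) := by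
  rw [pa_C_box]
  have h1 : ∀ u ∈ Finset.Icc 1 N, ∀ v ∈ Finset.Icc 1 N,
      (if u * v ≤ N then (1 / ((u : ℝ) * v)) else 0) * (if Nat.Coprime u v then (1 : ℝ) else 0)
      = ∑ g ∈ Finset.Icc 1 N, (if g ∣ u then (if g ∣ v then (ArithmeticFunction.moebius g : ℝ) *
        (if u * v ≤ N then (1 / ((u : ℝ) * v)) else 0) else 0) else 0) := by
    intro u hu v hv
    rw [Finset.mem_Icc] at hu
    rw [pa_moebius_coprime N u v hu.1 hu.2, Finset.mul_sum]
    refine Finset.sum_congr rfl fun g _ => ?_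
    by_cases a : g ∣ u <;> by_cases b : g ∣ v <;> simp [a, b]
    split_ifs <;> simp [mul_comm]
  rw [Finset.sum_congr rfl fun u hu => Finset.sum_congr rfl fun v hv => h1 u hu v hv]
  have h2 : ∀ u ∈ Finset.Icc 1 N, (∑ v ∈ Finset.Icc 1 N, ∑ g ∈ Finset.Icc 1 N, (if g ∣ u then
      (if g ∣ v then (ArithmeticFunction.moebius g : ℝ) *
        (if u * v ≤ N then (1 / ((u : ℝ) * v)) else 0) else 0) else 0)) =
      ∑ g ∈ Finset.Icc 1 N, if g ∣ u then ∑ v ∈ Finset.Icc 1 N,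
        (if g ∣ v then (ArithmeticFunction.moebius g : ℝ) *
        (if u * v ≤ N then (1 / ((u : ℝ) * v)) else 0) else 0) else 0 := by
    intro u _
    rw [Finset.sum_comm]
    refine Finset.sum_congr rfl fun g _ => ?_
    split_ifs <;> simp
  rw [Finset.sum_congr rfl h2, Finset.sum_comm]
  refine Finset.sum_congr rfl fun g hg => ?_
  rw [Finset.mem_Icc] at hg
  rw [pa_reindex N g hg.1]
  simp_rw [pa_reindex N g hg.1]
  rw [pa_D_box (N / g ^ 2) (N / g) (by rw [pow_two, ← Nat.div_div_eq_div_mul]; exact Nat.div_le_self _ _),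
    Finset.mul_sum]
  refine Finset.sum_congr rfl fun u _ => ?_
  rw [Finset.mul_sum]
  refine Finset.sum_congr rfl fun v _ => ?_
  have hiff : g * u * (g * v) ≤ N ↔ u * v ≤ N / g ^ 2 := by
    rw [Nat.le_div_iff_mul_le (by have := hg.1; positivity)]
    constructor <;> intro h <;> nlinarith
  simp only [hiff]
  split_ifs
  · push_cast
    have : (g : ℝ) ≠ 0 := by have := hg.1; positivity
    by_cases hu : (u : ℝ) = 0
    · simp [hu]
    by_cases hv : (v : ℝ) = 0
    · simp [hv]
    field_simp
  · simp

lemma pa_mu_sum : HasSum (fun g : ℕ => (ArithmeticFunction.moebius g : ℝ) / (g : ℝ) ^ 2)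
    (6 / Real.pi ^ 2) := by
  have hs : (1 : ℝ) < (2 : ℂ).re := by norm_num
  have h := ArithmeticFunction.LSeries_zeta_mul_Lseries_moebius hs
  rw [ArithmeticFunction.LSeries_zeta_eq_riemannZeta hs, riemannZeta_two] at h
  have hsum := (ArithmeticFunction.LSeriesSummable_moebius_iff.mpr hs).hasSum
  change HasSum _ (LSeries _ 2) at hsum
  have hpi : (Real.pi : ℂ) ≠ 0 := by exact_mod_cast Real.pi_ne_zero
  have hL : LSeries (fun n => ((ArithmeticFunction.moebius n : ℤ) : ℂ)) 2 =
      ((6 / Real.pi ^ 2 : ℝ) : ℂ) := by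
    push_cast
    field_simp at h ⊢
    linear_combination h
  rw [hL] at hsum
  rw [← Complex.hasSum_ofReal]
  convert hsum using 2 with g
  rcases eq_or_ne g 0 with rfl | hg
  · simp
  · rw [LSeries.term_of_ne_zero hg]
    push_cast
    congr 1
    exact_mod_cast rfl

lemma pa_log_summable : Summable (fun g : ℕ => (1 + Real.log g) / (g : ℝ) ^ 2) := by
  have h : Summable (fun g : ℕ => 3 * (1 / (g : ℝ) ^ (3 / 2 : ℝ))) :=
    (Real.summable_one_div_nat_rpow.2 (by norm_num)).mul_left 3
  refine Summable.of_nonneg_of_le (fun g => ?_) (fun g => ?_) h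
  · rcases Nat.eq_zero_or_pos g with rfl | hg
    · simp
    · have : 0 ≤ Real.log g := Real.log_natCast_nonneg g
      positivity
  · rcases Nat.eq_zero_or_pos g with rfl | hg
    · simp;
    · have hg1 : (1 : ℝ) ≤ g := by exact_mod_cast hg
      have h1 := Real.log_le_rpow_div (x := (g : ℝ)) (by positivity) (ε := 1 / 2) (by norm_num)
      have h2 : (1 : ℝ) ≤ (g : ℝ) ^ (1 / 2 : ℝ) := Real.one_le_rpow hg1 (by norm_num)
      have h3 : (g : ℝ) ^ 2 = (g : ℝ) ^ (1 / 2 : ℝ) * (g : ℝ) ^ (3 / 2 : ℝ) := by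
        rw [← Real.rpow_add (by positivity), ← Real.rpow_natCast]; norm_num
      rw [h3, div_le_iff₀ (by positivity)]
      have h4 : (0 : ℝ) < (g : ℝ) ^ (3 / 2 : ℝ) := by positivity
      have : 3 * (1 / (g : ℝ) ^ (3 / 2 : ℝ)) * ((g : ℝ) ^ (1 / 2 : ℝ) * (g : ℝ) ^ (3 / 2 : ℝ))
        = 3 * (g : ℝ) ^ (1 / 2 : ℝ) := by field_simp
      rw [this]
      linarith

lemma pa_C : ∃ K : ℝ, 0 ≤ K ∧ ∀ N : ℕ, 1 ≤ N →
    |Csum N - 3 / Real.pi ^ 2 * Real.log N ^ 2| ≤ K * (1 + Real.log N) := by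
  have hS := pa_log_summable
  set B := ∑' g : ℕ, (1 + Real.log g) / (g : ℝ) ^ 2 with hB
  have hterm : ∀ g : ℕ, 0 ≤ (1 + Real.log g) / (g : ℝ) ^ 2 := fun g => by
    have : 0 ≤ Real.log g := Real.log_natCast_nonneg g
    positivity
  refine ⟨10 * B, mul_nonneg (by norm_num) (tsum_nonneg hterm), fun N hN => ?_⟩
  have hN' : (1 : ℝ) ≤ N := by exact_mod_cast hN
  have hl0 : 0 ≤ Real.log N := Real.log_nonneg hN'
  have e1 : HasSum (fun g : ℕ => (ArithmeticFunction.moebius g : ℝ) / (g : ℝ) ^ 2 * Dsum (N / g ^ 2))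
      (Csum N) := by
    rw [pa_C_eq]
    apply hasSum_sum_of_ne_finset_zero
    intro g hg
    rw [Finset.mem_Icc] at hg
    rcases Nat.eq_zero_or_pos g with rfl | hg0
    · simp
    · have : N / g ^ 2 = 0 := Nat.div_eq_of_lt (by
        have : N < g := by by_contra h; exact hg ⟨hg0, by omega⟩
        nlinarith)
      rw [this, pa_D0, mul_zero]
  have e2 := pa_mu_sum.mul_right (Real.log N ^ 2 / 2)
  have e3 := e1.sub e2
  have e4 : Csum N - 3 / Real.pi ^ 2 * Real.log N ^ 2 =
      Csum N - 6 / Real.pi ^ 2 * (Real.log N ^ 2 / 2) := by ring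
  rw [e4, ← e3.tsum_eq, ← Real.norm_eq_abs]
  have hS2 := hS.mul_left (10 * (1 + Real.log N))
  have : 10 * B * (1 + Real.log N) = ∑' g : ℕ, 10 * (1 + Real.log N) * ((1 + Real.log g) / (g : ℝ) ^ 2) := by
    rw [tsum_mul_left, ← hB]; ring
  rw [this]
  refine tsum_of_norm_bounded hS2.hasSum fun g => ?_
  rcases Nat.eq_zero_or_pos g with rfl | hg0
  · simp
  rw [← mul_sub, Real.norm_eq_abs, abs_mul, abs_div]
  have hmu : |(ArithmeticFunction.moebius g : ℝ)| ≤ 1 := by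
    exact_mod_cast ArithmeticFunction.abs_moebius_le_one (n := g)
  have hd := pa_Dg N g hN hg0
  have hg1 : (0 : ℝ) < (g : ℝ) ^ 2 := by positivity
  rw [abs_of_pos hg1]
  calc _ ≤ 1 / (g : ℝ) ^ 2 * (10 * (1 + Real.log N) * (1 + Real.log g)) := by
        gcongr
    _ = _ := by ring

/-! ### Part B: counting residues -/

lemma pb_cfac_sum (N : ℕ) (hN : 1 ≤ N) :
    ∑ n ∈ Finset.Icc 1 N, (cfac n : ℝ) ≤ N * (1 + Real.log N) := by
  have h1 : ∀ n ∈ Finset.Icc 1 N, (cfac n : ℝ) ≤ ∑ u ∈ Finset.Icc 1 N, if u ∣ n then (1 : ℝ) else 0 := by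
    intro n hn
    rw [Finset.mem_Icc] at hn
    rw [← Finset.sum_filter]
    simp only [Finset.sum_const, nsmul_eq_mul, mul_one]
    have : cfac n ≤ n.divisors.card := by
      rw [cfac]
      refine (Finset.card_filter_le _ _).trans ?_
      rw [← Nat.map_div_right_divisors, Finset.card_map]
    refine (Nat.cast_le.2 this).trans (Nat.cast_le.2 (Finset.card_le_card ?_))
    intro u hu
    rw [Nat.mem_divisors] at hu
    simp only [Finset.mem_filter, Finset.mem_Icc]
    exact ⟨⟨Nat.pos_of_dvd_of_pos hu.1 hn.1, (Nat.le_of_dvd hn.1 hu.1).trans hn.2⟩, hu.1⟩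
  refine (Finset.sum_le_sum h1).trans ?_
  rw [Finset.sum_comm]
  have h2 : ∀ u ∈ Finset.Icc 1 N, (∑ n ∈ Finset.Icc 1 N, if u ∣ n then (1 : ℝ) else 0) ≤ N * (1 / (u : ℝ)) := by
    intro u hu
    rw [Finset.mem_Icc] at hu
    rw [pa_reindex N u hu.1 (fun _ => (1 : ℝ))]
    simp only [Finset.sum_const, Nat.card_Icc, add_tsub_cancel_right, nsmul_eq_mul, mul_one]
    rw [mul_one_div]
    exact Nat.cast_div_le
  refine (Finset.sum_le_sum h2).trans ?_
  rw [← Finset.mul_sum]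
  have := pa_harm_hi N 1 le_rfl hN
  simp only [Nat.div_one, Nat.cast_one, Real.log_one, sub_zero] at this
  gcongr

lemma pb_count_congr (p q : ℕ → Prop) [DecidablePred p] [DecidablePred q] (n : ℕ)
    (h : ∀ k, p k ↔ q k) : Nat.count p n = Nat.count q n := by
  induction n with
  | zero => simp
  | succ n ih => simp [Nat.count_succ, ih, h]

lemma pb_count_union (p q r : ℕ → Prop) [DecidablePred p] [DecidablePred q] [DecidablePred r] (n : ℕ)
    (h : ∀ k, r k ↔ p k ∨ q k) (hd : ∀ k, ¬ (p k ∧ q k)) :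
    Nat.count p n + Nat.count q n = Nat.count r n := by
  induction n with
  | zero => simp
  | succ n ih =>
    have := hd n
    have h2 := h n
    rw [Nat.count_succ, Nat.count_succ, Nat.count_succ, ← ih]
    by_cases a : p n <;> by_cases b : q n <;> simp_all <;> omega

lemma pb_count_odd (p : ℕ → Prop) [DecidablePred p] (h : ∀ a, ¬ p (2 * a)) (m : ℕ) :
    Nat.count p (2 * m) = Nat.count (fun r => p (2 * r + 1)) m := by
  induction m with
  | zero => simp
  | succ m ih =>
    rw [show 2 * (m + 1) = 2 * m + 1 + 1 by ring, Nat.count_succ, Nat.count_succ, ih, Nat.count_succ]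
    simp [h m]

lemma pb_count_even (p : ℕ → Prop) [DecidablePred p] (h : ∀ a, ¬ p (2 * a + 1)) (m : ℕ) :
    Nat.count p (2 * m) = Nat.count (fun r => p (2 * r)) m := by
  induction m with
  | zero => simp
  | succ m ih =>
    rw [show 2 * (m + 1) = 2 * m + 1 + 1 by ring, Nat.count_succ, Nat.count_succ, ih, Nat.count_succ]
    simp [h m]

lemma pb_count_mul (p : ℕ → Prop) [DecidablePred p] (q : ℕ) (hp : ∀ a, p (a + q) ↔ p a) (k n : ℕ) :
    Nat.count p (k * q + n) = k * Nat.count p q + Nat.count p n := by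
  induction k with
  | zero => simp
  | succ k ih =>
    rw [show (k + 1) * q + n = q + (k * q + n) by ring, Nat.count_add,
      pb_count_congr (fun j => p (q + j)) p _ (fun j => by rw [add_comm]; exact hp j), ih]
    ring

lemma pb_count_bound (p : ℕ → Prop) [DecidablePred p] (q : ℕ) (hq : 1 ≤ q)
    (hp : ∀ a, p (a + q) ↔ p a) (n : ℕ) :
    |(Nat.count p n : ℝ) - (n : ℝ) / q * Nat.count p q| ≤ Nat.count p q := by
  have h1 := pb_count_mul p q hp (n / q) (n % q)
  rw [Nat.div_add_mod'] at h1
  have h2 : Nat.count p (n % q) ≤ Nat.count p q := Nat.count_monotone p (Nat.mod_lt _ hq).le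
  have h3 : (Nat.count p (n % q) : ℝ) ≤ Nat.count p q := by exact_mod_cast h2
  have hq' : (0 : ℝ) < q := by exact_mod_cast hq
  have h4 : (n : ℝ) / q = (n / q : ℕ) + ((n % q : ℕ) : ℝ) / q := by
    have : (n : ℝ) = (n / q : ℕ) * q + (n % q : ℕ) := by exact_mod_cast (Nat.div_add_mod' n q).symm
    field_simp
    linarith
  have h5 : ((n % q : ℕ) : ℝ) / q ≤ 1 := by
    rw [div_le_one hq']; exact_mod_cast (Nat.mod_lt _ hq).le
  have h6 : 0 ≤ ((n % q : ℕ) : ℝ) / q := by positivity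
  rw [h1, h4]
  push_cast
  have h7 : (0 : ℝ) ≤ Nat.count p q := by positivity
  have h8 : (0 : ℝ) ≤ Nat.count p (n % q) := by positivity
  rw [abs_le]
  constructor <;> nlinarith

lemma pb_count_comp (p : ℕ → Prop) [DecidablePred p] (b : ℕ) (hb : 1 ≤ b) (hp : ∀ a, p (a % b) ↔ p a)
    (f : ℕ → ℕ) (hf : ∀ x < b, ∀ y < b, f x ≡ f y [MOD b] → x = y) :
    Nat.count (fun a => p (f a)) b = Nat.count p b := by
  rw [Nat.count_eq_card_filter_range, Nat.count_eq_card_filter_range]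
  have himg : (Finset.range b).image (fun x => f x % b) = Finset.range b := by
    apply Finset.eq_of_subset_of_card_le
    · intro y hy
      simp only [Finset.mem_image, Finset.mem_range] at hy ⊢
      obtain ⟨x, -, rfl⟩ := hy
      exact Nat.mod_lt _ hb
    · rw [Finset.card_image_of_injOn]
      intro x hx y hy h
      simp only [Finset.coe_range, Set.mem_Iio] at hx hy
      exact hf x hx y hy h
  apply Finset.card_bij (fun x _ => f x % b)
  · intro x hx
    simp only [Finset.mem_filter, Finset.mem_range] at hx ⊢
    exact ⟨Nat.mod_lt _ hb, (hp _).2 hx.2⟩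
  · intro x hx y hy h
    simp only [Finset.mem_filter, Finset.mem_range] at hx hy
    exact hf x hx.1 y hy.1 h
  · intro y hy
    simp only [Finset.mem_filter, Finset.mem_range] at hy
    have : y ∈ (Finset.range b).image (fun x => f x % b) := by rw [himg]; simpa using hy.1
    simp only [Finset.mem_image, Finset.mem_range] at this
    obtain ⟨x, hx, rfl⟩ := this
    exact ⟨x, by simp only [Finset.mem_filter, Finset.mem_range]; exact ⟨hx, (hp _).1 hy.2⟩, rfl⟩

/-- roots of `x² = 1` modulo `b` -/
def Rr (b : ℕ) : ℕ := Nat.count (fun a : ℕ => (b : ℤ) ∣ (a : ℤ) ^ 2 - 1) b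

/-- roots of `r (r+1) = 0` modulo `n` -/
def Gg (n : ℕ) : ℕ := Nat.count (fun r : ℕ => n ∣ r * (r + 1)) n

/-- roots for the second kind, modulo `2b` -/
def R2 (b : ℕ) : ℕ := Nat.count (fun t : ℕ => (4 * b : ℤ) ∣ (t : ℤ) ^ 2 - b ^ 2 - 4) (2 * b)

lemma pb_per1 (b a : ℕ) : (b : ℤ) ∣ ((a + b : ℕ) : ℤ) ^ 2 - 1 ↔ (b : ℤ) ∣ (a : ℤ) ^ 2 - 1 := by
  have : ((a + b : ℕ) : ℤ) ^ 2 - 1 = ((a : ℤ) ^ 2 - 1) + b * (2 * a + b) := by push_cast; ring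
  rw [this]; exact dvd_add_left (dvd_mul_right _ _)

lemma pb_per2 (b a : ℕ) : (4 * b : ℤ) ∣ ((a + 2 * b : ℕ) : ℤ) ^ 2 - b ^ 2 - 4 ↔
    (4 * b : ℤ) ∣ (a : ℤ) ^ 2 - b ^ 2 - 4 := by
  have : ((a + 2 * b : ℕ) : ℤ) ^ 2 - b ^ 2 - 4 = ((a : ℤ) ^ 2 - b ^ 2 - 4) + 4 * b * (a + b) := by
    push_cast; ring
  rw [this]; exact dvd_add_left (dvd_mul_right _ _)

lemma pb_per3 (n a : ℕ) : n ∣ (a + n) * (a + n + 1) ↔ n ∣ a * (a + 1) := by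
  have : (a + n) * (a + n + 1) = a * (a + 1) + n * (2 * a + n + 1) := by ring
  rw [this]; exact (Nat.dvd_add_iff_left (dvd_mul_right _ _)).symm

lemma pb_mod (b : ℕ) (c : ℤ) (a : ℕ) : (b : ℤ) ∣ ((a % b : ℕ) : ℤ) ^ 2 - c ↔ (b : ℤ) ∣ (a : ℤ) ^ 2 - c := by
  have h : (a : ℤ) = b * ((a / b : ℕ) : ℤ) + ((a % b : ℕ) : ℤ) := by
    exact_mod_cast (Nat.div_add_mod a b).symm
  have : (a : ℤ) ^ 2 - c = (((a % b : ℕ) : ℤ) ^ 2 - c) +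
      b * (((a / b : ℕ) : ℤ) * (b * ((a / b : ℕ) : ℤ) + 2 * ((a % b : ℕ) : ℤ))) := by
    rw [h]
    generalize ((a % b : ℕ) : ℤ) = x
    have hx : ((b : ℤ) * ((a / b : ℕ) : ℤ) + x) ^ 2 - c = x ^ 2 - c + b * (((a / b : ℕ) : ℤ) * (b * ((a / b : ℕ) : ℤ) + 2 * x)) := by ring
    exact hx
  rw [this]; exact (dvd_add_left (dvd_mul_right _ _)).symm

lemma pb_Gg (n : ℕ) (hn : 1 ≤ n) : Gg n = cfac n := by
  rw [Gg, Nat.count_eq_card_filter_range, cfac]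
  apply Finset.card_bij (fun r _ => (Nat.gcd n r, Nat.gcd n (r + 1)))
  · intro r hr
    simp only [Finset.mem_filter, Finset.mem_range, Nat.mem_divisorsAntidiagonal] at hr ⊢
    have hc : Nat.Coprime r (r + 1) := by simp
    refine ⟨⟨?_, by omega⟩, Nat.Coprime.gcd_both n n hc⟩
    rw [← Nat.Coprime.gcd_mul n hc]
    exact Nat.gcd_eq_left hr.2
  · intro r hr s hs h
    simp only [Finset.mem_filter, Finset.mem_range, Prod.mk.injEq] at hr hs h
    have hc : Nat.Coprime r (r + 1) := by simp
    have hprod : Nat.gcd n r * Nat.gcd n (r + 1) = n := by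
      rw [← Nat.Coprime.gcd_mul n hc]
      exact Nat.gcd_eq_left hr.2
    have hcop : Nat.Coprime (Nat.gcd n r) (Nat.gcd n (r + 1)) := Nat.Coprime.gcd_both n n hc
    have m1 : r ≡ s [MOD Nat.gcd n r] := by
      refine ((Nat.modEq_zero_iff_dvd.2 (Nat.gcd_dvd_right n r))).trans ?_
      rw [h.1]
      exact (Nat.modEq_zero_iff_dvd.2 (Nat.gcd_dvd_right n s)).symm
    have m2 : r ≡ s [MOD Nat.gcd n (r + 1)] := by
      apply Nat.ModEq.add_right_cancel' 1
      refine ((Nat.modEq_zero_iff_dvd.2 (Nat.gcd_dvd_right n (r + 1)))).trans ?_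
      rw [h.2]
      exact (Nat.modEq_zero_iff_dvd.2 (Nat.gcd_dvd_right n (s + 1))).symm
    have m3 := (Nat.modEq_and_modEq_iff_modEq_mul hcop).1 ⟨m1, m2⟩
    rw [hprod] at m3
    exact Nat.ModEq.eq_of_lt_of_lt m3 hr.1 hs.1
  · rintro ⟨u, v⟩ h
    simp only [Finset.mem_filter, Nat.mem_divisorsAntidiagonal] at h
    obtain ⟨⟨huv, -⟩, hc⟩ := h
    have hv : 0 < v := Nat.pos_of_ne_zero (by rintro rfl; simp at huv; omega)
    obtain ⟨k, hk1, hk2⟩ := Nat.chineseRemainder hc 0 (v - 1)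
    have hku : u ∣ k := Nat.modEq_zero_iff_dvd.1 hk1
    have hkv : v ∣ k + 1 := by
      apply Nat.modEq_zero_iff_dvd.1
      refine (hk2.add_right 1).trans ?_
      rw [Nat.sub_add_cancel hv]
      exact Nat.modEq_zero_iff_dvd.2 dvd_rfl
    have hkn : n ∣ k * (k + 1) := by rw [← huv]; exact mul_dvd_mul hku hkv
    have hkc : Nat.Coprime k (k + 1) := by simp
    have g1 : Nat.gcd n k = u := by
      rw [← huv, Nat.gcd_comm, Nat.Coprime.gcd_mul _ hc, Nat.gcd_eq_right hku]
      have : Nat.gcd k v = 1 := Nat.Coprime.coprime_dvd_right hkv hkc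
      rw [this, mul_one]
    have g2 : Nat.gcd n (k + 1) = v := by
      rw [← huv, Nat.gcd_comm, Nat.Coprime.gcd_mul _ hc, Nat.gcd_eq_right hkv]
      have : Nat.gcd (k + 1) u = 1 := (Nat.Coprime.coprime_dvd_left hku hkc).symm
      rw [this, one_mul]
    have e1 : Nat.gcd n (k % n) = Nat.gcd n k := by
      rw [Nat.gcd_comm, ← Nat.gcd_rec, ]
    have e2 : Nat.gcd n (k % n + 1) = Nat.gcd n (k + 1) := by
      rw [Nat.gcd_comm n, Nat.gcd_comm n]
      exact Nat.ModEq.gcd_eq ((Nat.mod_modEq k n).add_right 1)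
    refine ⟨k % n, ?_, ?_⟩
    · simp only [Finset.mem_filter, Finset.mem_range]
      refine ⟨Nat.mod_lt _ hn, ?_⟩
      have : n = Nat.gcd n (k % n) * Nat.gcd n (k % n + 1) := by rw [e1, e2, g1, g2, huv]
      conv_lhs => rw [this]
      exact mul_dvd_mul (Nat.gcd_dvd_right _ _) (Nat.gcd_dvd_right _ _)
    · rw [e1, e2, g1, g2]

lemma pb_Gg_two (n : ℕ) (hn : Odd n) : Gg (2 * n) = 2 * Gg n := by
  have h := pb_count_mul (fun r : ℕ => n ∣ r * (r + 1)) n (pb_per3 n) 2 0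
  simp only [add_zero, Nat.count_zero] at h
  rw [Gg, Gg, ← h]
  apply pb_count_congr
  intro r
  constructor
  · exact fun h => (dvd_mul_left _ _).trans h
  · intro h
    exact Nat.Coprime.mul_dvd_of_dvd_of_dvd (Nat.coprime_two_left.2 hn) (Nat.even_mul_succ_self r).two_dvd h

lemma pb_Gg_four (n : ℕ) (hn : 1 ≤ n) : Gg (4 * n) = Gg (2 * n) := by
  rw [Gg, Gg, show 4 * n = 2 * n + 2 * n by ring, Nat.count_add]
  apply pb_count_union
  · intro k
    obtain ⟨j, hj⟩ : Odd (2 * k + 1) := ⟨k, rfl⟩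
    have e : (2 * n + k) * (2 * n + k + 1) = k * (k + 1) + 2 * n * (2 * k + 1) + (2 * n + 2 * n) * n := by ring
    rw [e, ← Nat.dvd_add_iff_left (dvd_mul_right _ _)]
    constructor
    · rintro ⟨m, hm⟩
      rcases Nat.even_or_odd' m with ⟨i, rfl | rfl⟩
      · left; exact ⟨i, by rw [hm]; ring⟩
      · right; exact ⟨i + k + 1, by rw [hm]; ring⟩
    · rintro (h | h)
      · exact (Dvd.intro 2 (by ring)).trans h
      · have h2 : 2 * n ∣ k * (k + 1) + 2 * n * (2 * k + 1) := (Dvd.intro 2 (by ring)).trans h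
        exact (Nat.dvd_add_iff_left (dvd_mul_right _ _)).2 h2
  · rintro k ⟨h1, h2⟩
    have e : (2 * n + k) * (2 * n + k + 1) = k * (k + 1) + (2 * n * (2 * k + 1) + (2 * n + 2 * n) * n) := by ring
    rw [e, ← Nat.dvd_add_iff_right h1, ← Nat.dvd_add_iff_left (dvd_mul_right _ _),
      show 2 * n + 2 * n = 2 * n * 2 by ring] at h2
    have := Nat.dvd_of_mul_dvd_mul_left (by omega) h2
    omega

lemma pb_inj_two (b : ℕ) (hb : Odd b) (c : ℕ) :
    ∀ x < b, ∀ y < b, 2 * x + c ≡ 2 * y + c [MOD b] → x = y := by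
  intro x hx y hy h
  have h1 := Nat.ModEq.add_right_cancel' c h
  have h2 := Nat.ModEq.cancel_left_of_coprime (by simpa using hb) h1
  exact Nat.ModEq.eq_of_lt_of_lt h2 hx hy

lemma pb_odd_dvd4 (b : ℕ) (hb : Odd b) (x : ℤ) : (b : ℤ) ∣ 4 * x ↔ (b : ℤ) ∣ x := by
  have : IsCoprime (b : ℤ) 4 := by
    have h : Nat.Coprime b (2 ^ 2) := Nat.Coprime.pow_right 2 (by simpa using hb)
    exact_mod_cast (Nat.isCoprime_iff_coprime.2 h)
  exact ⟨fun h => this.dvd_of_dvd_mul_left h, fun h => h.mul_left 4⟩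

lemma pb_cast_dvd (n r : ℕ) : (n : ℤ) ∣ (r : ℤ) * (r + 1) ↔ n ∣ r * (r + 1) := by
  rw [← Int.natCast_dvd_natCast]; push_cast; rfl

lemma pb_Rr_odd (b : ℕ) (hb : Odd b) : Rr b = Gg b := by
  rw [Rr, Gg, ← pb_count_comp (fun a : ℕ => (b : ℤ) ∣ (a : ℤ) ^ 2 - 1) b hb.pos (pb_mod b 1)
    (fun r => 2 * r + 1) (pb_inj_two b hb 1)]
  apply pb_count_congr
  intro r
  rw [← pb_cast_dvd, ← pb_odd_dvd4 b hb ((r : ℤ) * (r + 1))]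
  push_cast
  ring_nf

lemma pb_Rr_even_aux (n a : ℕ) : ¬ (((2 * n : ℕ) : ℤ) ∣ ((2 * a : ℕ) : ℤ) ^ 2 - 1) := by
  rintro ⟨k, hk⟩
  push_cast at hk
  have : (2 : ℤ) ∣ 1 := ⟨2 * a ^ 2 - n * k, by linarith⟩
  omega

lemma pb_Rr_two (n : ℕ) (hn : Odd n) : Rr (2 * n) = Gg n := by
  rw [Rr, Gg, pb_count_odd _ (pb_Rr_even_aux n)]
  apply pb_count_congr
  intro r
  rw [← pb_cast_dvd, ← pb_odd_dvd4 n hn]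
  constructor
  · rintro ⟨k, hk⟩; exact ⟨2 * k, by push_cast at hk; linarith⟩
  · intro h
    obtain ⟨k, hk⟩ := (pb_odd_dvd4 n hn _).1 h
    exact ⟨2 * k, by push_cast; linarith⟩

lemma pb_Rr_four (n : ℕ) : Rr (4 * n) = 2 * Gg n := by
  have h := pb_count_mul (fun r : ℕ => n ∣ r * (r + 1)) n (pb_per3 n) 2 0
  simp only [add_zero, Nat.count_zero] at h
  rw [Gg, ← h, Rr, show 4 * n = 2 * (2 * n) by ring, pb_count_odd _ (pb_Rr_even_aux (2 * n))]
  apply pb_count_congr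
  intro r
  rw [← pb_cast_dvd]
  constructor
  · rintro ⟨k, hk⟩; exact ⟨k, by push_cast at hk; linarith⟩
  · rintro ⟨k, hk⟩; exact ⟨k, by push_cast; linarith⟩

lemma pb_R2 (b : ℕ) (hb : 1 ≤ b) : R2 b = Rr b := by
  rcases Nat.even_or_odd' b with ⟨n, rfl | rfl⟩
  · rw [R2, pb_count_even]
    · rw [Rr, ← pb_count_comp (fun a : ℕ => ((2 * n : ℕ) : ℤ) ∣ (a : ℤ) ^ 2 - 1) (2 * n) hb (pb_mod (2 * n) 1)
        (fun r => r + n)]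
      · apply pb_count_congr
        intro m
        constructor
        · rintro ⟨k, hk⟩; exact ⟨k + m + n, by push_cast at hk ⊢; linarith⟩
        · rintro ⟨k, hk⟩; exact ⟨k - m - n, by push_cast at hk ⊢; linarith⟩
      · intro x hx y hy h
        exact Nat.ModEq.eq_of_lt_of_lt (Nat.ModEq.add_right_cancel' n h) hx hy
    · rintro a ⟨k, hk⟩
      push_cast at hk
      have : (2 : ℤ) ∣ 1 := ⟨4 * n * k - 2 * a ^ 2 - 2 * a + 2 * n ^ 2 + 2, by linarith⟩
      omega
  · set b := 2 * n + 1 with hbdef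
    have hodd : Odd b := ⟨n, hbdef⟩
    have hbz : (b : ℤ) = 2 * n + 1 := by rw [hbdef]; push_cast; rfl
    rw [R2, pb_count_odd]
    · have h1 : Nat.count (fun r : ℕ => (4 * b : ℤ) ∣ ((2 * r + 1 : ℕ) : ℤ) ^ 2 - b ^ 2 - 4) b =
        Nat.count (fun r : ℕ => (b : ℤ) ∣ ((2 * r + 1 : ℕ) : ℤ) ^ 2 - 4) b := by
        apply pb_count_congr
        intro r
        constructor
        · rintro ⟨k, hk⟩; exact ⟨4 * k + b, by linarith⟩
        · rintro ⟨k, hk⟩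
          have h4 : (b : ℤ) ∣ 4 * (r ^ 2 + r - n ^ 2 - n - 1) := by
            refine ⟨k - b, ?_⟩
            have : (4 : ℤ) * (r ^ 2 + r - n ^ 2 - n - 1) = ((2 * r + 1 : ℕ) : ℤ) ^ 2 - 4 - (2 * n + 1) ^ 2 := by
              push_cast; ring
            rw [this, hk, ← hbz]; ring
          obtain ⟨j, hj⟩ := (pb_odd_dvd4 b hodd _).1 h4
          refine ⟨j, ?_⟩
          have : ((2 * r + 1 : ℕ) : ℤ) ^ 2 - b ^ 2 - 4 = (4 : ℤ) * (r ^ 2 + r - n ^ 2 - n - 1) := by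
            rw [hbz]; push_cast; ring
          rw [this, hj]; ring
      rw [h1, pb_count_comp (fun a : ℕ => (b : ℤ) ∣ (a : ℤ) ^ 2 - 4) b hb (pb_mod b 4)
        (fun r => 2 * r + 1) (pb_inj_two b hodd 1), 
        ← pb_count_comp (fun a : ℕ => (b : ℤ) ∣ (a : ℤ) ^ 2 - 4) b hb (pb_mod b 4)
        (fun r => 2 * r) (pb_inj_two b hodd 0), Rr]
      apply pb_count_congr
      intro r
      rw [← pb_odd_dvd4 b hodd ((r : ℤ) ^ 2 - 1)]
      push_cast
      ring_nf
    · rintro a ⟨k, hk⟩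
      rw [hbz] at hk
      push_cast at hk
      have : (2 : ℤ) ∣ 1 := ⟨2 * a ^ 2 - 2 * n ^ 2 - 2 * n - 2 - 2 * (2 * n + 1) * k, by linarith⟩
      omega

/-! ### Part C: the asymptotic count of pairs -/

lemma pc_Rr_id (b : ℕ) (hb : 1 ≤ b) : (Rr b : ℝ) = cfac b - (if 2 ∣ b then (cfac (b / 2) : ℝ) else 0)
    + 2 * (if 4 ∣ b then (cfac (b / 4) : ℝ) else 0) := by
  rcases Nat.even_or_odd' b with ⟨n, rfl | rfl⟩
  · rcases Nat.even_or_odd' n with ⟨m, rfl | rfl⟩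
    · have e : 2 * (2 * m) = 4 * m := by ring
      have hm : 1 ≤ m := by omega
      have d2 : 2 ∣ 4 * m := ⟨2 * m, by ring⟩
      have d4 : 4 ∣ 4 * m := ⟨m, rfl⟩
      have e2 : 4 * m / 2 = 2 * m := by omega
      have e4 : 4 * m / 4 = m := by omega
      rw [e, if_pos d2, if_pos d4, e2, e4, pb_Rr_four, ← pb_Gg _ hm, ← pb_Gg (4 * m) (by omega),
        ← pb_Gg (2 * m) (by omega), pb_Gg_four m hm]
      push_cast; ring
    · have hodd : Odd (2 * m + 1) := ⟨m, rfl⟩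
      have d2 : 2 ∣ 2 * (2 * m + 1) := ⟨_, rfl⟩
      have d4 : ¬ 4 ∣ 2 * (2 * m + 1) := by omega
      have e2 : 2 * (2 * m + 1) / 2 = 2 * m + 1 := by omega
      rw [if_pos d2, if_neg d4, e2, pb_Rr_two _ hodd, ← pb_Gg _ hb, ← pb_Gg _ hodd.pos, pb_Gg_two _ hodd]
      push_cast; ring
  · have hodd : Odd (2 * n + 1) := ⟨n, rfl⟩
    rw [if_neg (by omega), if_neg (by omega), pb_Rr_odd _ hodd, pb_Gg _ hb]
    ring

noncomputable def CR (N : ℕ) : ℝ := ∑ b ∈ Finset.Icc 1 N, (Rr b : ℝ) / b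

lemma pc_CR (N : ℕ) : CR N = Csum N - Csum (N / 2) / 2 + Csum (N / 4) / 2 := by
  have h1 : ∀ b ∈ Finset.Icc 1 N, (Rr b : ℝ) / b = (cfac b : ℝ) / b -
      (if 2 ∣ b then (cfac (b / 2) : ℝ) / b else 0) + (if 4 ∣ b then 2 * (cfac (b / 4) : ℝ) / b else 0) := by
    intro b hb
    rw [Finset.mem_Icc] at hb
    rw [pc_Rr_id b hb.1]
    split_ifs <;> ring
  rw [CR, Finset.sum_congr rfl h1, Finset.sum_add_distrib, Finset.sum_sub_distrib,
    pa_reindex N 2 (by norm_num) (fun b => (cfac (b / 2) : ℝ) / b),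
    pa_reindex N 4 (by norm_num) (fun b => 2 * (cfac (b / 4) : ℝ) / b), Csum, Csum, Csum,
    Finset.sum_div, Finset.sum_div]
  congr 1
  · congr 1
    refine Finset.sum_congr rfl fun u _ => ?_
    rw [Nat.mul_div_cancel_left _ (by norm_num)]
    push_cast
    rw [div_div, mul_comm]
  · refine Finset.sum_congr rfl fun u _ => ?_
    rw [Nat.mul_div_cancel_left _ (by norm_num)]
    push_cast
    rw [div_div, show (4 : ℝ) * u = 2 * (u * 2) by ring, mul_div_mul_left _ _ (by norm_num)]

lemma pc_log_div (N k : ℕ) (hk : 1 ≤ k) (hk4 : k ≤ 4) (hN : 4 ≤ N) :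
    1 ≤ N / k ∧ Real.log (N / k : ℕ) ≤ Real.log N ∧ Real.log N ≤ Real.log (N / k : ℕ) + 3 := by
  have h1 : 1 ≤ N / k := (Nat.one_le_div_iff hk).2 (by omega)
  have hr : (0 : ℝ) < (N / k : ℕ) := by exact_mod_cast h1
  refine ⟨h1, Real.log_le_log hr (by exact_mod_cast Nat.div_le_self _ _), ?_⟩
  have h2 : N ≤ (N / k) * 8 := by
    have := Nat.lt_div_mul_add (a := N) (b := k) hk
    nlinarith
  have h3 : (N : ℝ) ≤ (N / k : ℕ) * 8 := by exact_mod_cast h2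
  have hN0 : (0 : ℝ) < N := by exact_mod_cast (by omega : 0 < N)
  have h4 := Real.log_le_log hN0 h3
  rw [Real.log_mul hr.ne' (by norm_num), show (8 : ℝ) = 2 ^ 3 by norm_num, Real.log_pow] at h4
  have := Real.log_two_lt_d9
  push_cast at h4
  linarith

lemma pc_pi : 0 < 3 / Real.pi ^ 2 ∧ 3 / Real.pi ^ 2 ≤ 1 := by
  refine ⟨by positivity, ?_⟩
  rw [div_le_one (by positivity)]
  nlinarith [Real.pi_gt_three]

lemma pc_CR_asymp : ∃ K : ℝ, 0 ≤ K ∧ ∀ N : ℕ, 4 ≤ N →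
    |CR N - 3 / Real.pi ^ 2 * Real.log N ^ 2| ≤ K * (1 + Real.log N) := by
  obtain ⟨K, hK, h⟩ := pa_C
  refine ⟨2 * K + 6, by positivity, fun N hN => ?_⟩
  obtain ⟨a1, a2, a3⟩ := pc_log_div N 2 (by norm_num) (by norm_num) hN
  obtain ⟨b1, b2, b3⟩ := pc_log_div N 4 (by norm_num) (by norm_num) hN
  have c0 := h N (by omega)
  have c1 := h _ a1
  have c2 := h _ b1
  obtain ⟨p0, p1⟩ := pc_pi
  set κ := 3 / Real.pi ^ 2
  have l2 : 0 ≤ Real.log (N / 2 : ℕ) := Real.log_natCast_nonneg _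
  have l4 : 0 ≤ Real.log (N / 4 : ℕ) := Real.log_natCast_nonneg _
  set L := Real.log N
  set L2 := Real.log (N / 2 : ℕ)
  set L4 := Real.log (N / 4 : ℕ)
  have hL : 0 ≤ L := l2.trans a2
  have d2 : L ^ 2 - 6 * L ≤ L2 ^ 2 ∧ L2 ^ 2 ≤ L ^ 2 := by constructor <;> nlinarith
  have d4 : L ^ 2 - 6 * L ≤ L4 ^ 2 ∧ L4 ^ 2 ≤ L ^ 2 := by constructor <;> nlinarith
  have e2 : K * (1 + L2) ≤ K * (1 + L) := by gcongr
  have e4 : K * (1 + L4) ≤ K * (1 + L) := by gcongr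
  have f2 : κ * (L ^ 2 - L2 ^ 2) ≤ 6 * L := by nlinarith
  have f2' : 0 ≤ κ * (L ^ 2 - L2 ^ 2) := by apply mul_nonneg p0.le; linarith
  have f4 : κ * (L ^ 2 - L4 ^ 2) ≤ 6 * L := by nlinarith
  have f4' : 0 ≤ κ * (L ^ 2 - L4 ^ 2) := by apply mul_nonneg p0.le; linarith
  rw [pc_CR, abs_le]
  rw [abs_le] at c0 c1 c2
  constructor <;> nlinarith

noncomputable def SR (N : ℕ) : ℝ := ∑ b ∈ Finset.Icc 1 N, (Rr b : ℝ)

lemma pc_SR (N : ℕ) (hN : 4 ≤ N) : SR N ≤ 3 * (N * (1 + Real.log N)) := by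
  have h1 : ∀ b ∈ Finset.Icc 1 N, (Rr b : ℝ) ≤ (cfac b : ℝ)
      + (if 4 ∣ b then 2 * (cfac (b / 4) : ℝ) else 0) := by
    intro b hb
    rw [Finset.mem_Icc] at hb
    rw [pc_Rr_id b hb.1]
    have : (0 : ℝ) ≤ cfac (b / 2) := by positivity
    split_ifs <;> linarith
  refine (Finset.sum_le_sum h1).trans ?_
  rw [Finset.sum_add_distrib, pa_reindex N 4 (by norm_num) (fun b => 2 * (cfac (b / 4) : ℝ))]
  have h2 := pb_cfac_sum N (by omega)
  obtain ⟨b1, b2, b3⟩ := pc_log_div N 4 (by norm_num) (by norm_num) hN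
  have h3 := pb_cfac_sum (N / 4) b1
  have h4 : ∑ u ∈ Finset.Icc 1 (N / 4), 2 * (cfac (4 * u / 4) : ℝ) = 2 * ∑ u ∈ Finset.Icc 1 (N / 4), (cfac u : ℝ) := by
    rw [Finset.mul_sum]
    refine Finset.sum_congr rfl fun u _ => ?_
    rw [Nat.mul_div_cancel_left _ (by norm_num)]
  rw [h4]
  have h5 : ((N / 4 : ℕ) : ℝ) ≤ N := by exact_mod_cast Nat.div_le_self _ _
  have l4 : 0 ≤ Real.log (N / 4 : ℕ) := Real.log_natCast_nonneg _
  have h6 : ((N / 4 : ℕ) : ℝ) * (1 + Real.log (N / 4 : ℕ)) ≤ N * (1 + Real.log N) := by gcongr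
  linarith

/-- pairs for the first kind -/
def pairs1 (X : ℕ) : Finset (ℕ × ℕ) :=
  (Finset.Icc 1 X ×ˢ Finset.Icc 1 X).filter (fun p => p.1 < p.2 ∧ (p.1 : ℤ) ∣ (p.2 : ℤ) ^ 2 - 1)

/-- pairs for the second kind -/
def pairs2 (T : ℕ) : Finset (ℕ × ℕ) :=
  (Finset.Icc 1 T ×ˢ Finset.Icc 1 T).filter
    (fun p => p.1 < p.2 ∧ (4 * p.1 : ℤ) ∣ (p.2 : ℤ) ^ 2 - p.1 ^ 2 - 4)

lemma pc_pairs (X : ℕ) (P : ℕ → ℕ → Prop) [∀ b, DecidablePred (P b)] :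
    ((Finset.Icc 1 X ×ˢ Finset.Icc 1 X).filter (fun p : ℕ × ℕ => p.1 < p.2 ∧ P p.1 p.2)).card =
    ∑ b ∈ Finset.Icc 1 X, (Nat.count (P b) (X + 1) - Nat.count (P b) (b + 1)) := by
  rw [Finset.card_filter, Finset.sum_product]
  refine Finset.sum_congr rfl fun b hb => ?_
  rw [Finset.mem_Icc] at hb
  rw [← Finset.card_filter, Nat.count_eq_card_filter_range, Nat.count_eq_card_filter_range,
    ← Finset.card_sdiff_of_subset]
  · congr 1
    ext a
    simp only [Finset.mem_filter, Finset.mem_Icc, Finset.mem_sdiff, Finset.mem_range]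
    constructor
    · rintro ⟨⟨h1, h2⟩, h3, h4⟩
      exact ⟨⟨by omega, h4⟩, fun h => by omega⟩
    · rintro ⟨⟨h1, h4⟩, h5⟩
      have : ¬ a < b + 1 := fun h => h5 ⟨h, h4⟩
      exact ⟨⟨by omega, by omega⟩, by omega, h4⟩
  · intro a
    simp only [Finset.mem_filter, Finset.mem_range]
    rintro ⟨h1, h2⟩; exact ⟨by omega, h2⟩

lemma pc_one (p : ℕ → Prop) [DecidablePred p] (b q X : ℕ) (hb : 1 ≤ b) (hbX : b ≤ X) (hq : b ≤ q)
    (hp : ∀ a, p (a + q) ↔ p a) :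
    |((Nat.count p (X + 1) - Nat.count p (b + 1) : ℕ) : ℝ) - (X : ℝ) / q * Nat.count p q|
      ≤ 3 * Nat.count p q := by
  have h1 := pb_count_bound p q (by omega) hp (X + 1)
  have h2 := pb_count_bound p q (by omega) hp (b + 1)
  have hmono : Nat.count p (b + 1) ≤ Nat.count p (X + 1) := Nat.count_monotone p (by omega)
  rw [Nat.cast_sub hmono]
  have hq0 : (0 : ℝ) < q := by exact_mod_cast (by omega : 0 < q)
  push_cast at h1 h2
  rw [add_div] at h1 h2
  have h3 : (b : ℝ) / q ≤ 1 := by rw [div_le_one hq0]; exact_mod_cast hq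
  have h4 : 0 ≤ (b : ℝ) / q := by positivity
  have h5 : (0 : ℝ) ≤ Nat.count p q := by positivity
  have h6 : (b : ℝ) / q * Nat.count p q ≤ Nat.count p q := by nlinarith
  have h7 : 0 ≤ (b : ℝ) / q * Nat.count p q := by positivity
  rw [abs_le] at *
  constructor <;> nlinarith

lemma pc_pairs1 (X : ℕ) : |((pairs1 X).card : ℝ) - X * CR X| ≤ 3 * SR X := by
  have h := pc_pairs X (fun b a => (b : ℤ) ∣ (a : ℤ) ^ 2 - 1)
  rw [pairs1, h, Nat.cast_sum, CR, SR, Finset.mul_sum, Finset.mul_sum, ← Finset.sum_sub_distrib]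
  refine (Finset.abs_sum_le_sum_abs _ _).trans (Finset.sum_le_sum fun b hb => ?_)
  rw [Finset.mem_Icc] at hb
  have := pc_one (fun a : ℕ => (b : ℤ) ∣ (a : ℤ) ^ 2 - 1) b b X hb.1 hb.2 le_rfl (pb_per1 b)
  rw [← Rr] at this
  have e : (X : ℝ) * ((Rr b : ℝ) / b) = (X : ℝ) / b * Rr b := by ring
  rw [e]
  exact this

lemma pc_pairs2 (X : ℕ) : |((pairs2 X).card : ℝ) - X / 2 * CR X| ≤ 3 * SR X := by
  have h := pc_pairs X (fun b t => (4 * b : ℤ) ∣ (t : ℤ) ^ 2 - b ^ 2 - 4)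
  rw [pairs2, h, Nat.cast_sum, CR, SR, Finset.mul_sum, Finset.mul_sum, ← Finset.sum_sub_distrib]
  refine (Finset.abs_sum_le_sum_abs _ _).trans (Finset.sum_le_sum fun b hb => ?_)
  rw [Finset.mem_Icc] at hb
  have := pc_one (fun t : ℕ => (4 * b : ℤ) ∣ (t : ℤ) ^ 2 - b ^ 2 - 4) b (2 * b) X hb.1 hb.2 (by omega)
    (pb_per2 b)
  rw [← R2, pb_R2 b hb.1] at this
  have e : (X : ℝ) / 2 * ((Rr b : ℝ) / b) = (X : ℝ) / ((2 * b : ℕ) : ℝ) * Rr b := by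
    push_cast
    rw [div_mul_div_comm, div_mul_eq_mul_div]
  rw [e]
  exact this

lemma pc_real (K X C1 C2 S1 S2 P1 P2 κ L LX T : ℝ) (hK : 0 ≤ K)
    (a2 : LX ≤ L) (a3 : L ≤ LX + 3)
    (q1 : |P1 - X * C1| ≤ 3 * S1) (q2 : |P2 - T / 2 * C2| ≤ 3 * S2)
    (s1 : S1 ≤ 3 * (X * (1 + LX))) (s2 : S2 ≤ 3 * (T * (1 + L)))
    (c1 : |C1 - κ * LX ^ 2| ≤ K * (1 + LX)) (c2 : |C2 - κ * L ^ 2| ≤ K * (1 + L))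
    (hXle : X ≤ T / 2) (hXge : T / 2 - 1 ≤ X) (p0 : 0 < κ) (p1 : κ ≤ 1) (hT8 : 8 ≤ T)
    (hLT : L ≤ T) (lX : 0 ≤ LX) (hX0 : 0 ≤ X) :
    |P1 + P2 - κ * T * L ^ 2| ≤ (2 * K + 40) * (T * (1 + L)) := by
  have hL : 0 ≤ L := lX.trans a2
  set E := T * (1 + L) with hE
  have hTp : (0 : ℝ) < T := by linarith
  have hE0 : 0 ≤ E := by positivity
  have hXE : X * (1 + LX) ≤ E := by
    rw [hE]; gcongr; linarith
  have r1 : |X * C1 - X * (κ * LX ^ 2)| ≤ K * E := by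
    rw [← mul_sub, abs_mul, abs_of_nonneg hX0]
    calc _ ≤ X * (K * (1 + LX)) := by gcongr
      _ = K * (X * (1 + LX)) := by ring
      _ ≤ _ := by gcongr
  have r2 : |T / 2 * C2 - T / 2 * (κ * L ^ 2)| ≤ K * E := by
    rw [← mul_sub, abs_mul, abs_of_nonneg (by positivity)]
    calc _ ≤ T / 2 * (K * (1 + L)) := by gcongr
      _ = K * E / 2 := by rw [hE]; ring
      _ ≤ _ := by have : 0 ≤ K * E := by positivity
                  linarith
  have d : L ^ 2 - 6 * L ≤ LX ^ 2 ∧ LX ^ 2 ≤ L ^ 2 := by constructor <;> nlinarith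
  have r3 : |X * LX ^ 2 - T / 2 * L ^ 2| ≤ 10 * E := by
    have hTL : T * L ≤ E := by rw [hE]; nlinarith
    have hL2 : L ^ 2 ≤ T * L := by nlinarith
    have u1 : X * LX ^ 2 ≤ T / 2 * L ^ 2 := by
      apply mul_le_mul hXle d.2 (by positivity) (by positivity)
    have u2 : X * (L ^ 2 - 6 * L) ≤ X * LX ^ 2 := by apply mul_le_mul_of_nonneg_left d.1 hX0
    have u3 : X * L ≤ T * L := by apply mul_le_mul_of_nonneg_right _ hL; linarith
    have u4 : (T / 2 - 1) * L ^ 2 ≤ X * L ^ 2 := by apply mul_le_mul_of_nonneg_right hXge; positivity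
    rw [abs_le]
    constructor <;> nlinarith
  have r4 : |κ * (X * LX ^ 2 - T / 2 * L ^ 2)| ≤ 10 * E := by
    rw [abs_mul, abs_of_pos p0]
    have := abs_nonneg (X * LX ^ 2 - T / 2 * L ^ 2)
    nlinarith
  have e3 : κ * (X * LX ^ 2 - T / 2 * L ^ 2) = X * (κ * LX ^ 2) - T / 2 * (κ * L ^ 2) := by ring
  have e4 : κ * T * L ^ 2 = 2 * (T / 2 * (κ * L ^ 2)) := by ring
  rw [e3] at r4
  rw [e4]
  have e5 : (2 * K + 40) * E = 2 * (K * E) + 40 * E := by ring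
  rw [e5]
  have s1' : S1 ≤ 3 * E := by linarith
  rw [abs_le] at q1 q2 r1 r2 r4 ⊢
  constructor <;> linarith [q1.1, q1.2, q2.1, q2.2, r1.1, r1.2, r2.1, r2.2, r4.1, r4.2]

lemma pc_main : ∃ K : ℝ, 0 ≤ K ∧ ∀ T : ℕ, 8 ≤ T →
    |((pairs1 (T / 2)).card : ℝ) + (pairs2 T).card - 3 / Real.pi ^ 2 * T * Real.log T ^ 2|
      ≤ K * (T * (1 + Real.log T)) := by
  obtain ⟨K, hK, h⟩ := pc_CR_asymp
  refine ⟨2 * K + 40, by positivity, fun T hT => ?_⟩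
  have hX4 : 4 ≤ T / 2 := by omega
  obtain ⟨-, a2, a3⟩ := pc_log_div T 2 (by norm_num) (by norm_num) (by omega)
  have q1 := pc_pairs1 (T / 2)
  have q2 := pc_pairs2 T
  have s1 := pc_SR (T / 2) hX4
  have s2 := pc_SR T (by omega)
  have c1 := h (T / 2) hX4
  have c2 := h T (by omega)
  have hXle : ((T / 2 : ℕ) : ℝ) ≤ T / 2 := Nat.cast_div_le
  have hXge : (T : ℝ) / 2 - 1 ≤ ((T / 2 : ℕ) : ℝ) := by
    have : T ≤ 2 * (T / 2) + 1 := by omega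
    have : (T : ℝ) ≤ 2 * ((T / 2 : ℕ) : ℝ) + 1 := by exact_mod_cast this
    linarith
  obtain ⟨p0, p1⟩ := pc_pi
  have hT8 : (8 : ℝ) ≤ T := by exact_mod_cast hT
  have hLT : Real.log T ≤ T := by
    have := Real.log_le_sub_one_of_pos (x := (T : ℝ)) (by positivity)
    linarith
  have lX : 0 ≤ Real.log (T / 2 : ℕ) := Real.log_natCast_nonneg _
  have hX0 : (0 : ℝ) ≤ ((T / 2 : ℕ) : ℝ) := by positivity
  exact pc_real K _ _ _ _ _ _ _ _ _ _ _ hK a2 a3 q1 q2 s1 s2 c1 c2 hXle hXge p0 p1 hT8 hLT lX hX0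

lemma pd_fiber4 {S G : Type*} [Group S] [Group G] (ι : S →* G) (hι : Function.Injective ι)
    (z : S) (hz : ∀ g, z * g = g * z) (hz2 : z * z = 1) (hz1 : z ≠ 1) (w : Bool → G)
    (hw : ∀ j, w j * w j = 1) (hzw : ∀ j, w j * ι z = ι z * w j)
    (U : ∀ g j k, ι g * w j = w k * ι g → j = k ∧ (g = 1 ∨ g = z))
    (E : ∀ j A, w j * ι A * (w j * ι A) = 1 → ∃ k g, w k * ι g = ι g * (w j * ι A))
    (D : ∀ j k g, ∃ B : S, ι B = w j * ((ι g)⁻¹ * w k * ι g))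
    (i : Bool) (A : S) (hA : w i * ι A * w i = (ι A)⁻¹)
    (Z : ∀ B, B * A = A * B → ∃ k : ℤ, B = A ^ k ∨ B = z * A ^ k)
    (I : ∀ k : ℤ, A ^ k = 1 ∨ A ^ k = z → k = 0) :
    {p : Bool × S | w p.1 * ι p.2 * w p.1 = (ι p.2)⁻¹ ∧ ∃ g, g * A * g⁻¹ = p.2}.ncard = 4 := by
  have winv : ∀ j, (w j)⁻¹ = w j := fun j => inv_eq_of_mul_eq_one_left (hw j)
  have hAn : ∀ n : ℤ, w i * ι (A ^ n) = (ι (A ^ n))⁻¹ * w i := by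
    intro n
    have h1 : (w i * ι A * (w i)⁻¹) ^ n = ((ι A)⁻¹) ^ n := by rw [winv, hA]
    rw [conj_zpow, _root_.inv_zpow] at h1
    rw [map_zpow, ← h1]
    group
  have hzi : z⁻¹ = z := inv_eq_of_mul_eq_one_left hz2
  let ζ : Bool → S := fun e => if e then z else 1
  have hζc : ∀ e g, ζ e * g = g * ζ e := by
    intro e g; cases e <;> simp [ζ, hz]
  have hζw : ∀ e j, w j * ι (ζ e) = ι (ζ e) * w j := by
    intro e j; cases e <;> simp [ζ, hzw]
  have hζ2 : ∀ e, ζ e * ζ e = 1 := by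
    intro e; cases e <;> simp [ζ, hz2]
  let ν : Bool → ℤ := fun e => if e then 1 else 0
  have hM : ∀ p : Bool × Bool, w i * ι (ζ p.1 * A ^ ν p.2) * (w i * ι (ζ p.1 * A ^ ν p.2)) = 1 := by
    intro p
    have e1 : w i * ι (ζ p.1 * A ^ ν p.2) = ι (ζ p.1) * (ι (A ^ ν p.2))⁻¹ * w i := by
      rw [map_mul, ← mul_assoc, hζw, mul_assoc, hAn, mul_assoc]
    calc w i * ι (ζ p.1 * A ^ ν p.2) * (w i * ι (ζ p.1 * A ^ ν p.2))
        = ι (ζ p.1) * (ι (A ^ ν p.2))⁻¹ * (w i * w i) * ι (ζ p.1 * A ^ ν p.2) := by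
          nth_rewrite 1 [e1]; group
      _ = ι (ζ p.1 * (A ^ ν p.2)⁻¹ * (A ^ ν p.2 * ζ p.1)) := by
          rw [hw, hζc]; simp
      _ = 1 := by
          rw [show ζ p.1 * (A ^ ν p.2)⁻¹ * (A ^ ν p.2 * ζ p.1) = ζ p.1 * ζ p.1 by group, hζ2, map_one]
  choose jj gg hjg using fun p : Bool × Bool => E i (ζ p.1 * A ^ ν p.2) (hM p)
  let F : Bool × Bool → Bool × S := fun p => (jj p, gg p * A * (gg p)⁻¹)
  have hinj : Function.Injective F := by
    intro p q hpq
    have hj : jj p = jj q := congrArg Prod.fst hpq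
    have hg : gg p * A * (gg p)⁻¹ = gg q * A * (gg q)⁻¹ := congrArg Prod.snd hpq
    have hcomm : ((gg q)⁻¹ * gg p) * A = A * ((gg q)⁻¹ * gg p) := by
      have : gg p * A = gg q * A * (gg q)⁻¹ * gg p := by rw [← hg]; group
      rw [mul_assoc, this]; group
    obtain ⟨k, hk⟩ := Z _ hcomm
    obtain ⟨e, hk⟩ : ∃ e, (gg q)⁻¹ * gg p = ζ e * A ^ k := by
      rcases hk with hk | hk
      · exact ⟨false, by simp [ζ, hk]⟩
      · exact ⟨true, by simp [ζ, hk]⟩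
    have hgp : gg p = gg q * (ζ e * A ^ k) := by rw [← hk]; group
    have h1 := hjg p
    have h2 := hjg q
    rw [hj, hgp, map_mul, ← mul_assoc, h2] at h1
    have h3 : w i * ι (ζ q.1 * A ^ ν q.2) * ι (ζ e * A ^ k)
        = ι (ζ e * A ^ k) * (w i * ι (ζ p.1 * A ^ ν p.2)) := by
      apply mul_left_cancel (a := ι (gg q))
      rw [← mul_assoc, h1, mul_assoc]
    have h4 : ι (ζ e * A ^ k) * w i = w i * ι (ζ e * A ^ (-k)) := by
      rw [map_mul, map_mul, ← mul_assoc, hζw, mul_assoc, mul_assoc, hAn, _root_.zpow_neg, map_inv, inv_inv]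
    rw [← mul_assoc, h4, mul_assoc, mul_assoc, ← map_mul, ← map_mul] at h3
    have h5 := hι (mul_left_cancel h3)
    have h6 : ζ q.1 * A ^ (ν q.2 + k) = ζ p.1 * A ^ (ν p.2 - k) := by
      apply mul_left_cancel (a := ζ e)
      calc ζ e * (ζ q.1 * A ^ (ν q.2 + k)) = ζ q.1 * A ^ ν q.2 * (ζ e * A ^ k) := by
            rw [_root_.zpow_add, ← mul_assoc, hζc e (ζ q.1), mul_assoc, ← mul_assoc (ζ e), hζc e (A ^ _)]
            group
        _ = _ := h5
        _ = _ := by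
            rw [mul_assoc, ← mul_assoc _ (ζ p.1), ← hζc p.1, sub_eq_neg_add, _root_.zpow_add]
            group
    have h7 : A ^ (ν q.2 - ν p.2 + 2 * k) = ζ q.1 * ζ p.1 := by
      have : A ^ (ν q.2 + k) = ζ q.1 * (ζ p.1 * A ^ (ν p.2 - k)) := by
        rw [← h6, ← mul_assoc, hζ2, one_mul]
      calc A ^ (ν q.2 - ν p.2 + 2 * k) = A ^ (ν q.2 + k) * A ^ (-(ν p.2 - k)) := by
            rw [← _root_.zpow_add]; congr 1; ring
        _ = _ := by rw [this]; group
    have h8 := I (ν q.2 - ν p.2 + 2 * k) (by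
      rw [h7]
      cases q.1 <;> cases p.1 <;> simp [ζ, hz2])
    rw [h8, zpow_zero] at h7
    obtain ⟨p1, p2⟩ := p
    obtain ⟨q1, q2⟩ := q
    have h9 : p2 = q2 := by
      clear hjg hpq hj hg hcomm hk hgp h1 h2 h3 h4 h5 h6 h7
      cases p2 <;> cases q2 <;> simp [ν] at h8 ⊢ <;> omega
    have h10 : p1 = q1 := by
      clear hjg hpq hj hg hcomm hk hgp h1 h2 h3 h4 h5 h6 h8
      have hz1' := hz1.symm
      cases p1 <;> cases q1 <;> simp [ζ, hz1'] at h7 ⊢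
    rw [h9, h10]
  have hset : {p : Bool × S | w p.1 * ι p.2 * w p.1 = (ι p.2)⁻¹ ∧ ∃ g, g * A * g⁻¹ = p.2}
      = Set.range F := by
    ext ⟨j, B⟩
    simp only [Set.mem_ofPred_eq, Set.mem_range]
    constructor
    · rintro ⟨h1, g, rfl⟩
      obtain ⟨C, hC⟩ := D i j g
      have hC' : (ι g)⁻¹ * w j * ι g = w i * ι C := by
        rw [hC, ← mul_assoc, hw, one_mul]
      have hCA : C * A = A * C := by
        apply hι
        rw [map_mul, map_mul, hC]
        have h2 : w j * (ι g * ι A * (ι g)⁻¹) = ι g * (ι A)⁻¹ * (ι g)⁻¹ * w j := by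
          simp only [map_mul, map_inv, _root_.mul_inv_rev, inv_inv] at h1
          calc _ = w j * (ι g * ι A * (ι g)⁻¹) * w j * (w j)⁻¹ := by group
            _ = _ := by rw [h1, winv]; group
        have h3 : w i * (ι A)⁻¹ = ι A * w i := by
          have := hAn (-1); simpa using this
        calc w i * ((ι g)⁻¹ * w j * ι g) * ι A
            = w i * (ι g)⁻¹ * (w j * (ι g * ι A * (ι g)⁻¹)) * ι g := by group
          _ = (w i * (ι A)⁻¹) * (ι g)⁻¹ * w j * ι g := by rw [h2]; group
          _ = _ := by rw [h3]; group
      obtain ⟨k, hk⟩ := Z C hCA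
      obtain ⟨e, hk⟩ : ∃ e, C = ζ e * A ^ k := by
        rcases hk with hk | hk
        · exact ⟨false, by simp [ζ, hk]⟩
        · exact ⟨true, by simp [ζ, hk]⟩
      obtain ⟨f, m, hm⟩ : ∃ f m, k = ν f + 2 * m := by
        rcases Int.even_or_odd' k with ⟨m, hm | hm⟩
        · exact ⟨false, m, by simp [ν, hm]⟩
        · exact ⟨true, m, by simp [ν, hm]; ring⟩
      refine ⟨(e, f), ?_⟩
      have h4 : w j * ι (g * A ^ (-m)) = ι (g * A ^ (-m)) * (w i * ι (ζ e * A ^ ν f)) := by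
        have a1 : w j * ι g = ι g * (w i * ι C) := by rw [← hC']; group
        have a2 : ι (A ^ (-m)) * w i = w i * ι (A ^ m) := by rw [hAn, _root_.zpow_neg, map_inv]
        rw [map_mul, ← mul_assoc, a1, mul_assoc (ι g), mul_assoc (ι g), mul_assoc (w i),
          ← mul_assoc (ι (A ^ (-m)))]
        apply congrArg (fun x => ι g * x)
        rw [a2, mul_assoc, ← map_mul, ← map_mul]
        congr 2
        rw [hk, ← mul_assoc, ← hζc, mul_assoc, mul_assoc, ← _root_.zpow_add, ← _root_.zpow_add]
        congr 2
        rw [hm]; ring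
      have h5 := hjg (e, f)
      obtain ⟨u1, u2⟩ := U (g * A ^ (-m) * (gg (e, f))⁻¹) (jj (e, f)) j (by
        rw [map_mul, map_inv, ← mul_assoc, h4]
        have a3 : (ι (gg (e, f)))⁻¹ * w (jj (e, f)) = (w i * ι (ζ e * A ^ ν f)) * (ι (gg (e, f)))⁻¹ := by
          have h6 : w (jj (e, f)) = ι (gg (e, f)) * (w i * ι (ζ e * A ^ ν f)) * (ι (gg (e, f)))⁻¹ := by
            rw [← h5]; group
          rw [h6]; group
        rw [mul_assoc, a3, ← mul_assoc])
      have h7 : ∃ e', g * A ^ (-m) = ζ e' * gg (e, f) := by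
        rcases u2 with u2 | u2
        · exact ⟨false, by simpa [ζ] using mul_inv_eq_one.1 u2⟩
        · exact ⟨true, by simpa [ζ] using mul_inv_eq_iff_eq_mul.1 u2⟩
      obtain ⟨e', h7⟩ := h7
      have h8 : g = ζ e' * gg (e, f) * A ^ m := by rw [← h7]; group
      have h9 : g * A * g⁻¹ = gg (e, f) * A * (gg (e, f))⁻¹ := by
        rw [h8]
        calc _ = ζ e' * (gg (e, f) * A * (gg (e, f))⁻¹) * (ζ e')⁻¹ := by group
          _ = _ := by rw [hζc]; group
      simp only [F, u1, h9]
    · rintro ⟨p, hp⟩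
      have hB : gg p * A * (gg p)⁻¹ = B := congrArg Prod.snd hp
      have hj : jj p = j := congrArg Prod.fst hp
      refine ⟨?_, gg p, hB⟩
      rw [← hB, ← hj]
      have h1 := hjg p
      have h2 : w i * ι (ζ p.1 * A ^ ν p.2) * ι A = (ι A)⁻¹ * (w i * ι (ζ p.1 * A ^ ν p.2)) := by
        have : w i * ι A = (ι A)⁻¹ * w i := by simpa using hAn 1
        rw [← mul_assoc, ← this, mul_assoc, mul_assoc, ← map_mul, ← map_mul, mul_assoc]
        congr 2
        rw [← mul_assoc A, ← hζc, mul_assoc, ← _root_.zpow_add_one, ← _root_.zpow_one_add, add_comm]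
      set N := w i * ι (ζ p.1 * A ^ ν p.2) with hN
      have h3 : w (jj p) = ι (gg p) * N * (ι (gg p))⁻¹ := by rw [← h1]; group
      have h4 : N * N = 1 := hM p
      rw [h3]
      simp only [map_mul, map_inv]
      calc _ = ι (gg p) * (N * ι A) * N * (ι (gg p))⁻¹ := by group
        _ = ι (gg p) * (ι A)⁻¹ * (N * N) * (ι (gg p))⁻¹ := by rw [h2]; group
        _ = _ := by rw [h4]; group
  rw [hset, ← Set.image_univ, Set.ncard_image_of_injective _ hinj]
  simp [Set.ncard_univ]

def kk (j : Bool) : ℤ := if j then 1 else 0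

lemma kk_sq (k : ℤ) : (!![1, 0; k, -1] : Matrix (Fin 2) (Fin 2) ℤ) * !![1, 0; k, -1] = 1 := by
  ext i j; fin_cases i <;> fin_cases j <;> simp [Matrix.mul_apply, Fin.sum_univ_two]

def wG (j : Bool) : GL (Fin 2) ℤ :=
  ⟨!![1, 0; kk j, -1], !![1, 0; kk j, -1], kk_sq _, kk_sq _⟩

def toG : SL(2, ℤ) →* GL (Fin 2) ℤ := Matrix.SpecialLinearGroup.toGL

lemma toG_inj : Function.Injective toG := Matrix.SpecialLinearGroup.toGL_injective

lemma toG_coe (A : SL(2, ℤ)) : ((toG A : GL (Fin 2) ℤ) : Matrix (Fin 2) (Fin 2) ℤ) = A.1 := rfl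

lemma wG_coe (j : Bool) : ((wG j : GL (Fin 2) ℤ) : Matrix (Fin 2) (Fin 2) ℤ) = !![1, 0; kk j, -1] := rfl

lemma pd_det (A : SL(2, ℤ)) : A 0 0 * A 1 1 - A 0 1 * A 1 0 = 1 := by
  have := A.2; rw [Matrix.det_fin_two] at this; exact this

def InvBy (i : Bool) (A : SL(2, ℤ)) : Prop := A 1 1 = A 0 0 + kk i * A 0 1

lemma mat_ext {M N : Matrix (Fin 2) (Fin 2) ℤ} :
    M = N ↔ M 0 0 = N 0 0 ∧ M 0 1 = N 0 1 ∧ M 1 0 = N 1 0 ∧ M 1 1 = N 1 1 := by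
  constructor
  · rintro rfl; simp
  · rintro ⟨h1, h2, h3, h4⟩
    ext i j; fin_cases i <;> fin_cases j <;> assumption

lemma sl_ext {M N : SL(2, ℤ)} :
    M = N ↔ M 0 0 = N 0 0 ∧ M 0 1 = N 0 1 ∧ M 1 0 = N 1 0 ∧ M 1 1 = N 1 1 := by
  rw [← mat_ext]; exact Subtype.ext_iff

lemma sl_mul (A B : SL(2, ℤ)) : (A * B) 0 0 = A 0 0 * B 0 0 + A 0 1 * B 1 0 ∧
    (A * B) 0 1 = A 0 0 * B 0 1 + A 0 1 * B 1 1 ∧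
    (A * B) 1 0 = A 1 0 * B 0 0 + A 1 1 * B 1 0 ∧
    (A * B) 1 1 = A 1 0 * B 0 1 + A 1 1 * B 1 1 := by
  refine ⟨?_, ?_, ?_, ?_⟩ <;>
  · rw [Matrix.SpecialLinearGroup.coe_mul, Matrix.mul_apply, Fin.sum_univ_two]

lemma sl_inv (A : SL(2, ℤ)) : A⁻¹ 0 0 = A 1 1 ∧ A⁻¹ 0 1 = - A 0 1 ∧ A⁻¹ 1 0 = - A 1 0 ∧
    A⁻¹ 1 1 = A 0 0 := by
  rw [Matrix.SpecialLinearGroup.SL2_inv_expl]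
  refine ⟨rfl, rfl, rfl, rfl⟩

lemma sl_neg (A : SL(2, ℤ)) (i j : Fin 2) : (-A) i j = - A i j := by
  rw [Matrix.SpecialLinearGroup.coe_neg, Matrix.neg_apply]

lemma kk_01 (j : Bool) : (j = false ∧ kk j = 0) ∨ (j = true ∧ kk j = 1) := by
  cases j <;> simp [kk]

lemma invBy_mat (k : ℤ) (A : SL(2, ℤ)) : !![1, 0; k, -1] * A.1 * !![1, 0; k, -1] = (A⁻¹).1 ↔
    A 1 1 = A 0 0 + k * A 0 1 := by
  obtain ⟨a1, a2, a3, a4⟩ := sl_inv A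
  rw [mat_ext]
  erw [a1, a2, a3, a4]
  simp only [Matrix.mul_apply, Fin.sum_univ_two]
  simp
  constructor
  · intro h; linarith [h.1]
  · intro h
    rw [h]
    refine ⟨by ring, by ring, by ring⟩

lemma invBy_iff (i : Bool) (A : SL(2, ℤ)) :
    wG i * toG A * wG i = (toG A)⁻¹ ↔ InvBy i A := by
  rw [← map_inv, Units.ext_iff]
  exact invBy_mat (kk i) A

lemma pd_U (g : SL(2, ℤ)) (j k : Bool) (h : toG g * wG j = wG k * toG g) :
    j = k ∧ (g = 1 ∨ g = -1) := by
  rw [Units.ext_iff, Units.val_mul, Units.val_mul, mat_ext, toG_coe, wG_coe, wG_coe] at h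
  simp [Matrix.mul_apply, Fin.sum_univ_two] at h
  obtain ⟨h1, h2, h3, -⟩ := h
  have hd := pd_det g
  have hb : g 0 1 = 0 := by
    show g.1 0 1 = 0
    omega
  rw [hb] at hd
  have hd' : g 0 0 * g 1 1 = 1 := by linarith
  rw [sl_ext, sl_ext]
  simp only [sl_neg]
  simp
  change g 1 0 + g 1 1 * kk j = kk k * g 0 0 + - g 1 0 at h3
  rw [hb]
  generalize g 0 0 = a at *
  generalize g 1 1 = d at *
  generalize g 1 0 = c at *
  rcases Int.eq_one_or_neg_one_of_mul_eq_one' hd' with ⟨rfl, rfl⟩ | ⟨rfl, rfl⟩ <;>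
  rcases kk_01 j with ⟨rfl, hj⟩ | ⟨rfl, hj⟩ <;> rcases kk_01 k with ⟨rfl, hk⟩ | ⟨rfl, hk⟩ <;>
  simp only [hj, hk] at h3 <;> simp <;> omega

lemma pd_prim (u v : ℤ) (h : u ≠ 0 ∨ v ≠ 0) : ∃ a b x y t : ℤ, t ≠ 0 ∧ u = t * a ∧ v = t * b ∧
    a * y - b * x = 1 := by
  have hg : Int.gcd u v ≠ 0 := by rw [Ne, Int.gcd_eq_zero_iff]; tauto
  have hg' : ((Int.gcd u v : ℕ) : ℤ) ≠ 0 := by exact_mod_cast hg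
  obtain ⟨a, ha⟩ := Int.gcd_dvd_left u v
  obtain ⟨b, hb⟩ := Int.gcd_dvd_right u v
  refine ⟨a, b, - Int.gcdB u v, Int.gcdA u v, Int.gcd u v, hg', ha, hb, ?_⟩
  have := Int.gcd_eq_gcd_ab u v
  apply mul_left_cancel₀ hg'
  nth_rewrite 2 [ha] at this
  nth_rewrite 4 [hb] at this
  linarith

lemma pd_Eint (p q r : ℤ) (h : p ^ 2 + q * r = 1) : ∃ (a b c d : ℤ) (j : Bool), a * d - b * c = 1 ∧
    a = a * p + b * r ∧ b = a * q - b * p ∧ kk j * a - c = c * p + d * r ∧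
    kk j * b - d = c * q - d * p := by
  have : ∃ u v : ℤ, (u ≠ 0 ∨ v ≠ 0) ∧ u = u * p + v * r ∧ v = u * q - v * p := by
    by_cases h1 : 1 + p ≠ 0 ∨ q ≠ 0
    · exact ⟨1 + p, q, h1, by linarith, by ring⟩
    · push Not at h1
      refine ⟨r, 1 - p, ?_, ?_, ?_⟩
      · right; omega
      · ring
      · linarith
  obtain ⟨u, v, huv, e1, e2⟩ := this
  obtain ⟨a, b, x, y, t, ht, rfl, rfl, hd⟩ := pd_prim u v huv
  have f1 : a = a * p + b * r := by apply mul_left_cancel₀ ht; linarith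
  have f2 : b = a * q - b * p := by apply mul_left_cancel₀ ht; linarith
  obtain ⟨m, j, hm⟩ : ∃ (m : ℤ) (j : Bool), y * (x * p + y * r) - x * (x * q - y * p) = kk j - 2 * m := by
    rcases Int.even_or_odd' (y * (x * p + y * r) - x * (x * q - y * p)) with ⟨m, hm | hm⟩
    · exact ⟨-m, false, by simp [kk]; linarith⟩
    · exact ⟨-m, true, by simp [kk]; linarith⟩
  have hs : a * (x * q - y * p) - b * (x * p + y * r) = -1 := by
    linear_combination (-x) * f2 + y * f1 - hd
  have g1 : (kk j - 2 * m) * a - x = x * p + y * r := by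
    rw [← hm]
    linear_combination (x * p + y * r) * hd - x * hs
  have g2 : (kk j - 2 * m) * b - y = x * q - y * p := by
    rw [← hm]
    linear_combination (x * q - y * p) * hd - y * hs
  refine ⟨a, b, x + m * a, y + m * b, j, by linarith, f1, f2, ?_, ?_⟩
  · linear_combination g1 + m * f1
  · linear_combination g2 + m * f2

lemma pd_E (j : Bool) (A : SL(2, ℤ)) (h : wG j * toG A * (wG j * toG A) = 1) :
    ∃ k g, wG k * toG g = toG g * (wG j * toG A) := by
  set M : Matrix (Fin 2) (Fin 2) ℤ := !![1, 0; kk j, -1] * A.1 with hM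
  have h1 : M * M = 1 := by
    have := congrArg Units.val h
    exact this
  have hdet : M.det = -1 := by
    rw [hM, Matrix.det_mul, A.2]; simp [Matrix.det_fin_two]
  rw [Matrix.det_fin_two] at hdet
  rw [mat_ext] at h1
  simp only [Matrix.mul_apply, Fin.sum_univ_two] at h1
  simp at h1
  obtain ⟨a1, a2, a3, a4⟩ := h1
  have hp : M 1 1 = - M 0 0 := by
    have c1 : M 0 0 * (M 0 0 + M 1 1) = 0 := by linarith
    rcases mul_eq_zero.1 c1 with c | c
    · rw [c] at a1 a2 ⊢
      by_contra hne
      have d1 : M 0 1 * M 1 1 = 0 := by linarith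
      rcases mul_eq_zero.1 d1 with e | e
      · rw [e] at a1; simp at a1
      · rw [e] at hne; simp at hne
    · linarith
  obtain ⟨a, b, c, d, k, e1, e2, e3, e4, e5⟩ := pd_Eint (M 0 0) (M 0 1) (M 1 0) (by linarith)
  refine ⟨k, ⟨!![a, b; c, d], by rw [Matrix.det_fin_two]; simpa using e1⟩, ?_⟩
  rw [Units.ext_iff]
  change !![1, 0; kk k, -1] * !![a, b; c, d] = !![a, b; c, d] * M
  rw [mat_ext]
  simp only [Matrix.mul_apply, Fin.sum_univ_two, hp]
  simp
  refine ⟨?_, ?_, ?_, ?_⟩ <;> linarith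

lemma pd_D (j k : Bool) (g : SL(2, ℤ)) : ∃ B : SL(2, ℤ),
    toG B = wG j * ((toG g)⁻¹ * wG k * toG g) := by
  refine ⟨⟨(wG j * ((toG g)⁻¹ * wG k * toG g) : GL (Fin 2) ℤ).1, ?_⟩, Units.ext rfl⟩
  rw [← map_inv]
  change ( !![1, 0; kk j, -1] * ((g⁻¹).1 * !![1, 0; kk k, -1] * g.1)).det = 1
  rw [Matrix.det_mul, Matrix.det_mul, Matrix.det_mul, g.2, (g⁻¹).2]
  simp [Matrix.det_fin_two]

lemma pd_b_ne (A : SL(2, ℤ)) (hA : 3 ≤ A 0 0 + A 1 1) : A 0 1 ≠ 0 := by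
  intro h
  have := pd_det A
  rw [h] at this
  have h2 : A 0 0 * A 1 1 = 1 := by linarith
  rcases Int.eq_one_or_neg_one_of_mul_eq_one' h2 with ⟨h3, h4⟩ | ⟨h3, h4⟩ <;> omega

lemma pd_comm (A B : SL(2, ℤ)) (h : A * B = B * A) :
    B 0 1 * A 1 0 = A 0 1 * B 1 0 ∧ B 0 1 * (A 0 0 - A 1 1) = A 0 1 * (B 0 0 - B 1 1) := by
  rw [sl_ext] at h
  obtain ⟨a1, a2, a3, a4⟩ := sl_mul A B
  obtain ⟨b1, b2, b3, b4⟩ := sl_mul B A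
  rw [a1, a2, a3, a4, b1, b2, b3, b4] at h
  obtain ⟨c1, c2, c3, c4⟩ := h
  constructor <;> linarith

lemma pd_psi (A : SL(2, ℤ)) (hA : 3 ≤ A 0 0 + A 1 1) :
    ∃ ψ : Subgroup.centralizer ({A} : Set SL(2, ℤ)) →* Multiplicative ℝ,
      (∀ B, ψ B = 1 → B.1 = 1 ∨ B.1 = -1) ∧
      (∀ B, 0 < (ψ B).toAdd → Real.log 2 ≤ (ψ B).toAdd) ∧
      (∀ B, B.1 = -1 → ψ B = 1) := by
  have hb := pd_b_ne A hA
  have hbr : (A 0 1 : ℝ) ≠ 0 := by exact_mod_cast hb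
  have hdetA := pd_det A
  obtain ⟨κ, hκ⟩ : ∃ κ : ℝ, (A 0 1 : ℝ) * κ ^ 2 + ((A 0 0 : ℝ) - A 1 1) * κ - A 1 0 = 0 := by
    have hdet : (A 0 0 : ℝ) * A 1 1 - A 0 1 * A 1 0 = 1 := by exact_mod_cast hdetA
    have hA' : (3 : ℝ) ≤ A 0 0 + A 1 1 := by exact_mod_cast hA
    have hs := Real.mul_self_sqrt (show (0 : ℝ) ≤ ((A 0 0 : ℝ) + A 1 1) ^ 2 - 4 by nlinarith)
    set r := √(((A 0 0 : ℝ) + A 1 1) ^ 2 - 4)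
    refine ⟨(-((A 0 0 : ℝ) - A 1 1) + r) / (2 * A 0 1), ?_⟩
    field_simp
    nlinarith
  let φ : SL(2, ℤ) → ℝ := fun B => B 0 0 + B 0 1 * κ
  have hcomm : ∀ B : Subgroup.centralizer ({A} : Set SL(2, ℤ)), A * B.1 = B.1 * A := by
    intro B
    have := Subgroup.mem_centralizer_singleton_iff.1 B.2
    first | exact this | exact this.symm
  have heig : ∀ B : Subgroup.centralizer ({A} : Set SL(2, ℤ)),
      (B.1 1 0 : ℝ) + B.1 1 1 * κ = κ * φ B.1 := by
    intro B
    obtain ⟨c1, c2⟩ := pd_comm A B.1 (hcomm B)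
    have c1' : (B.1 0 1 : ℝ) * A 1 0 = A 0 1 * B.1 1 0 := by exact_mod_cast c1
    have c2' : (B.1 0 1 : ℝ) * (A 0 0 - A 1 1) = A 0 1 * (B.1 0 0 - B.1 1 1) := by exact_mod_cast c2
    apply mul_left_cancel₀ hbr
    simp only [φ]
    linear_combination (-(B.1 0 1 : ℝ)) * hκ + κ * c2' - c1'
  have hmul : ∀ B C : Subgroup.centralizer ({A} : Set SL(2, ℤ)), φ (B * C : _).1 = φ B.1 * φ C.1 := by
    intro B C
    obtain ⟨a1, a2, a3, a4⟩ := sl_mul B.1 C.1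
    have e : φ (B * C : _).1 = ((B.1 * C.1) 0 0 : ℤ) + ((B.1 * C.1) 0 1 : ℤ) * κ := rfl
    rw [e, a1, a2]
    push_cast
    have := heig C
    simp only [φ] at this ⊢
    linear_combination (B.1 0 1 : ℝ) * this
  have hone : φ 1 = 1 := by simp [φ]
  have hinv : ∀ B : Subgroup.centralizer ({A} : Set SL(2, ℤ)), φ B.1 * φ (B.1)⁻¹ = 1 := by
    intro B
    have := hmul B B⁻¹
    rw [mul_inv_cancel] at this
    rw [← hone]; exact this.symm
  have hne : ∀ B : Subgroup.centralizer ({A} : Set SL(2, ℤ)), φ B.1 ≠ 0 := by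
    intro B h
    have := hinv B
    rw [h] at this; simp at this
  have htr : ∀ B : Subgroup.centralizer ({A} : Set SL(2, ℤ)),
      φ B.1 + φ (B.1)⁻¹ = ((B.1 0 0 + B.1 1 1 : ℤ) : ℝ) := by
    intro B
    obtain ⟨a1, a2, a3, a4⟩ := sl_inv B.1
    simp only [φ, a1, a2]
    push_cast; ring
  let ψ : Subgroup.centralizer ({A} : Set SL(2, ℤ)) →* Multiplicative ℝ :=
    MonoidHom.mk' (fun B => Multiplicative.ofAdd (Real.log (φ B.1))) (by
      intro B C
      rw [← ofAdd_add, ← Real.log_mul (hne B) (hne C), hmul])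
  have hψ : ∀ B, (ψ B).toAdd = Real.log (φ B.1) := fun B => rfl
  refine ⟨ψ, ?_, ?_, ?_⟩
  · intro B hB
    have h1 : Real.log (φ B.1) = 0 := by rw [← hψ, hB]; rfl
    have h2 : φ B.1 = 1 ∨ φ B.1 = -1 := by
      rw [Real.log_eq_zero] at h1
      have := hne B
      tauto
    have h3 : (B.1 0 0 + B.1 1 1 : ℤ) = 2 ∨ (B.1 0 0 + B.1 1 1 : ℤ) = -2 := by
      have e1 := hinv B
      have e2 := htr B
      rcases h2 with h2 | h2
      · left
        have : ((B.1 0 0 + B.1 1 1 : ℤ) : ℝ) = 2 := by rw [← e2]; rw [h2] at e1 ⊢; linarith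
        exact_mod_cast this
      · right
        have : ((B.1 0 0 + B.1 1 1 : ℤ) : ℝ) = -2 := by rw [← e2]; rw [h2] at e1 ⊢; linarith
        exact_mod_cast this
    obtain ⟨c1, c2⟩ := pd_comm A B.1 (hcomm B)
    have hd := pd_det B.1
    have h4 : (B.1 0 0 + B.1 1 1) ^ 2 = 4 := by rcases h3 with h | h <;> rw [h] <;> norm_num
    have h5 : B.1 0 1 = 0 := by
      have e3 : (B.1 0 1) ^ 2 * ((A 0 0 + A 1 1) ^ 2 - 4) = 0 := by
        have : (B.1 0 1) ^ 2 * ((A 0 0 + A 1 1) ^ 2 - 4)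
            = (A 0 1) ^ 2 * ((B.1 0 0 + B.1 1 1) ^ 2 - 4) := by
          have i1 : (B.1 0 1) ^ 2 * ((A 0 0 + A 1 1) ^ 2 - 4)
              = (B.1 0 1 * (A 0 0 - A 1 1)) ^ 2 + 4 * (B.1 0 1 * A 0 1) * (B.1 0 1 * A 1 0) := by
            linear_combination (4 * (B.1 0 1) ^ 2) * hdetA
          have i2 : (A 0 1) ^ 2 * ((B.1 0 0 + B.1 1 1) ^ 2 - 4)
              = (A 0 1 * (B.1 0 0 - B.1 1 1)) ^ 2 + 4 * (B.1 0 1 * A 0 1) * (A 0 1 * B.1 1 0) := by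
            linear_combination (4 * (A 0 1) ^ 2) * hd
          rw [i1, i2, c1, c2]
        rw [this, h4]; ring
      have : (A 0 0 + A 1 1) ^ 2 - 4 ≠ 0 := by nlinarith
      rcases mul_eq_zero.1 e3 with h | h
      · exact pow_eq_zero_iff (two_ne_zero) |>.1 h
      · exact absurd h this
    rw [h5] at c1 c2
    have h6 : B.1 1 0 = 0 := by
      rcases mul_eq_zero.1 (show A 0 1 * B.1 1 0 = 0 by linarith) with h | h
      · exact absurd h hb
      · exact h
    have h7 : B.1 0 0 - B.1 1 1 = 0 := by
      rcases mul_eq_zero.1 (show A 0 1 * (B.1 0 0 - B.1 1 1) = 0 by linarith) with h | h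
      · exact absurd h hb
      · exact h
    rw [sl_ext, sl_ext]
    simp only [sl_neg]
    simp
    rw [h5, h6]
    omega
  · intro B hB
    rw [hψ] at hB ⊢
    by_contra hlt
    push Not at hlt
    have e1 := hinv B
    have e2 := htr B
    have p1 : 1 < |φ B.1| := by
      rw [← Real.log_abs] at hB
      exact (Real.log_pos_iff (abs_nonneg _)).1 hB
    have p2 : |φ B.1| < 2 := by
      rw [← Real.log_abs] at hlt
      exact (Real.log_lt_log_iff (by linarith) (by norm_num)).1 hlt
    set x := φ B.1
    set y := φ (B.1)⁻¹
    rcases abs_cases x with ⟨q1, q2⟩ | ⟨q1, q2⟩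
    · rw [q1] at p1 p2
      have t1 : (2 : ℝ) < x + y := by nlinarith [sq_pos_of_pos (sub_pos.2 p1)]
      have t2 : x + y < 3 := by nlinarith
      rw [e2] at t1 t2
      have t1' : 2 < B.1 0 0 + B.1 1 1 := by exact_mod_cast t1
      have t2' : B.1 0 0 + B.1 1 1 < 3 := by exact_mod_cast t2
      omega
    · rw [q1] at p1 p2
      have t1 : x + y < -2 := by nlinarith [sq_pos_of_pos (sub_pos.2 p1)]
      have t2 : -3 < x + y := by nlinarith
      rw [e2] at t1 t2
      have t1' : B.1 0 0 + B.1 1 1 < -2 := by exact_mod_cast t1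
      have t2' : -3 < B.1 0 0 + B.1 1 1 := by exact_mod_cast t2
      omega
  · intro B hB
    change Multiplicative.ofAdd (Real.log (φ B.1)) = 1
    rw [hB]
    have : φ (-1) = -1 := by
      simp only [φ, sl_neg]; simp
    rw [this]; simp

lemma pmOne_mem (g : SL(2, ℤ)) : g ∈ pmOne ↔ g = 1 ∨ g = -1 := by
  rw [pmOne, Subgroup.mem_zpowers_iff]
  constructor
  · rintro ⟨k, rfl⟩
    rcases Int.even_or_odd' k with ⟨m, rfl | rfl⟩
    · left; rw [_root_.zpow_mul]; simp
    · right; rw [_root_.zpow_add, _root_.zpow_mul]; simp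
  · rintro (rfl | rfl)
    · exact ⟨0, by simp⟩
    · exact ⟨1, by simp⟩

lemma mk_eq (A B : SL(2, ℤ)) : (QuotientGroup.mk A : PSL2Z) = QuotientGroup.mk B ↔
    B = A ∨ B = -A := by
  rw [QuotientGroup.eq, pmOne_mem, inv_mul_eq_one, inv_mul_eq_iff_eq_mul]
  constructor
  · rintro (h | h)
    · left; exact h.symm
    · right; rw [h]; simp
  · rintro (h | h)
    · left; exact h.symm
    · right; rw [h]; simp

lemma pd_I (A : SL(2, ℤ)) (hA : 3 ≤ A 0 0 + A 1 1) (k : ℤ) (h : A ^ k = 1 ∨ A ^ k = -1) : k = 0 := by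
  obtain ⟨ψ, h1, h2, h3⟩ := pd_psi A hA
  let a : Subgroup.centralizer ({A} : Set SL(2, ℤ)) :=
    ⟨A, Subgroup.mem_centralizer_singleton_iff.2 rfl⟩
  have h4 : ψ (a ^ k) = 1 := by
    rcases h with h | h
    · have : a ^ k = 1 := Subtype.ext h
      rw [this, map_one]
    · exact h3 _ h
  rw [map_zpow] at h4
  have h5 : (k : ℝ) * (ψ a).toAdd = 0 := by
    have := congrArg Multiplicative.toAdd h4
    simpa using this
  rcases mul_eq_zero.1 h5 with h6 | h6
  · exact_mod_cast h6
  · exfalso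
    have h7 := h1 a (Multiplicative.toAdd.injective h6)
    change A = 1 ∨ A = -1 at h7
    rcases h7 with h7 | h7
    · rw [h7] at hA; simp at hA
    · rw [h7] at hA; simp only [sl_neg] at hA; simp at hA

lemma pd_Z (A : SL(2, ℤ)) (hA : 3 ≤ A 0 0 + A 1 1) (hp : IsPrim (QuotientGroup.mk A))
    (B : SL(2, ℤ)) (hB : B * A = A * B) : ∃ k : ℤ, B = A ^ k ∨ B = -1 * A ^ k := by
  obtain ⟨ψ, h1, h2, h3⟩ := pd_psi A hA
  let a : Subgroup.centralizer ({A} : Set SL(2, ℤ)) :=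
    ⟨A, Subgroup.mem_centralizer_singleton_iff.2 rfl⟩
  let b : Subgroup.centralizer ({A} : Set SL(2, ℤ)) :=
    ⟨B, Subgroup.mem_centralizer_singleton_iff.2 (by first | exact hB | exact hB.symm)⟩
  have key : ∀ x y : Subgroup.centralizer ({A} : Set SL(2, ℤ)), ψ x = ψ y → x.1 = y.1 ∨ x.1 = - y.1 := by
    intro x y hxy
    have := h1 (x * y⁻¹) (by rw [map_mul, map_inv, hxy, mul_inv_cancel])
    change x.1 * y.1⁻¹ = 1 ∨ x.1 * y.1⁻¹ = -1 at this
    rw [mul_inv_eq_one, mul_inv_eq_iff_eq_mul] at this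
    rcases this with h | h
    · left; exact h
    · right; rw [h]; simp
  let Λ : AddSubgroup ℝ := (MonoidHom.toAdditiveLeft ψ).range
  have hΛ : ∀ r, r ∈ Λ ↔ ∃ x, (ψ x).toAdd = r := by
    intro r
    constructor
    · rintro ⟨x, rfl⟩; exact ⟨x.toMul, rfl⟩
    · rintro ⟨x, rfl⟩; exact ⟨Additive.ofMul x, rfl⟩
  obtain ⟨g, hg⟩ := AddSubgroup.cyclic_of_isolated_zero (H := Λ) (a := Real.log 2)
    (Real.log_pos (by norm_num)) (by
      rw [Set.disjoint_left]
      intro r hr hr2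
      obtain ⟨x, rfl⟩ := (hΛ r).1 hr
      have := h2 x hr2.1
      linarith [hr2.2])
  have hgm : g ∈ Λ := by rw [hg]; exact AddSubgroup.subset_closure rfl
  obtain ⟨c, hc⟩ := (hΛ g).1 hgm
  have hpow : ∀ x, ∃ n : ℤ, ψ x = ψ (c ^ n) := by
    intro x
    have : (ψ x).toAdd ∈ Λ := (hΛ _).2 ⟨x, rfl⟩
    rw [hg, AddSubgroup.mem_closure_singleton] at this
    obtain ⟨n, hn⟩ := this
    refine ⟨n, ?_⟩
    rw [map_zpow, ← ofAdd_toAdd (ψ x), ← hn, ← hc]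
    rfl
  obtain ⟨n, hn⟩ := hpow a
  obtain ⟨m, hm⟩ := hpow b
  have hmk : (QuotientGroup.mk c.1 : PSL2Z) ^ n = QuotientGroup.mk A := by
    rw [← QuotientGroup.mk_zpow, mk_eq]
    exact key _ _ hn
  have hn1 : n = 1 ∨ n = -1 := by
    have n0 : n ≠ 0 := by
      rintro rfl
      have := pd_I A hA 1 (by
        have h9 := key _ _ hn
        change A = (c ^ (0 : ℤ)).1 ∨ A = - (c ^ (0 : ℤ)).1 at h9
        simpa using h9)
      omega
    by_contra hcon
    push Not at hcon
    apply hp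
    rcases lt_or_gt_of_ne n0 with h | h
    · refine ⟨(QuotientGroup.mk c.1 : PSL2Z)⁻¹, n.natAbs, by omega, ?_⟩
      rw [← hmk, ← zpow_natCast, _root_.inv_zpow', Int.natCast_natAbs, abs_of_neg h, neg_neg]
    · refine ⟨(QuotientGroup.mk c.1 : PSL2Z), n.natAbs, by omega, ?_⟩
      rw [← hmk, ← zpow_natCast, Int.natCast_natAbs, abs_of_pos h]
  obtain ⟨k, hk⟩ : ∃ k : ℤ, ψ b = ψ (a ^ k) := by
    rcases hn1 with rfl | rfl
    · exact ⟨m, by rw [hm, map_zpow, map_zpow, hn]; simp⟩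
    · exact ⟨-m, by rw [hm, map_zpow, map_zpow, hn]; simp⟩
  refine ⟨k, ?_⟩
  have := key _ _ hk
  simpa using this

lemma pd_fiber (i : Bool) (A : SL(2, ℤ)) (hA : 3 ≤ A 0 0 + A 1 1) (hp : IsPrim (QuotientGroup.mk A))
    (hi : InvBy i A) :
    {p : Bool × SL(2, ℤ) | InvBy p.1 p.2 ∧ ∃ g, g * A * g⁻¹ = p.2}.ncard = 4 := by
  have := pd_fiber4 toG toG_inj (-1) (by simp) (by simp) (by
      intro h
      have := congrArg (fun B : SL(2, ℤ) => B 0 0) h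
      simp only [sl_neg] at this
      simp at this) wG (fun j => Units.ext (kk_sq _)) (by
      intro j
      have : toG (-1) = -1 := Units.ext (by
        rw [toG_coe]; simp)
      rw [this]; simp) pd_U pd_E pd_D i A ((invBy_iff i A).2 hi) (pd_Z A hA hp) (pd_I A hA)
  simpa only [invBy_iff] using this

def trc (A : SL(2, ℤ)) : ℤ := A 0 0 + A 1 1

lemma trc_eq (A : SL(2, ℤ)) : Matrix.trace (A : Matrix (Fin 2) (Fin 2) ℤ) = trc A := by
  rw [Matrix.trace_fin_two]; rfl

lemma trc_neg (A : SL(2, ℤ)) : trc (-A) = - trc A := by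
  simp only [trc, sl_neg]; ring

lemma trc_conj (g A : SL(2, ℤ)) : trc (g * A * g⁻¹) = trc A := by
  rw [← trc_eq, ← trc_eq, Matrix.SpecialLinearGroup.coe_mul, Matrix.trace_mul_comm,
    ← Matrix.SpecialLinearGroup.coe_mul, ← mul_assoc, inv_mul_cancel, one_mul]

def Pset (T : ℕ) : Set (Bool × SL(2, ℤ)) :=
  {p | (InvBy p.1 p.2 ∧ 3 ≤ trc p.2 ∧ trc p.2 ≤ T) ∧ IsPrim (QuotientGroup.mk p.2)}

lemma isPrim_conj {γ δ : PSL2Z} (h : IsConj γ δ) (hγ : IsPrim γ) : IsPrim δ := by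
  rintro ⟨η, n, hn, rfl⟩
  obtain ⟨c, hc⟩ := isConj_iff.1 h
  apply hγ
  refine ⟨c⁻¹ * η * c, n, hn, ?_⟩
  have : c⁻¹ * η * c = c⁻¹ * η * (c⁻¹)⁻¹ := by rw [inv_inv]
  rw [this, conj_pow, ← hc]; group

lemma isConj_mk (A B : SL(2, ℤ)) (h : IsConj (QuotientGroup.mk A : PSL2Z) (QuotientGroup.mk B)) :
    ∃ g, g * A * g⁻¹ = B ∨ g * A * g⁻¹ = -B := by
  obtain ⟨c, hc⟩ := isConj_iff.1 h
  obtain ⟨g, rfl⟩ := QuotientGroup.mk_surjective c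
  refine ⟨g, ?_⟩
  rw [← QuotientGroup.mk_inv, ← QuotientGroup.mk_mul, ← QuotientGroup.mk_mul] at hc
  exact (mk_eq _ _).1 hc.symm

lemma mk_isConj (A g : SL(2, ℤ)) :
    IsConj (QuotientGroup.mk A : PSL2Z) (QuotientGroup.mk (g * A * g⁻¹)) := by
  rw [isConj_iff]
  exact ⟨QuotientGroup.mk g, rfl⟩

lemma kk_inv (k : ℤ) : (!![1, 0; k, -1] : Matrix (Fin 2) (Fin 2) ℤ)⁻¹ = !![1, 0; k, -1] :=
  Matrix.inv_eq_left_inv (kk_sq k)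

lemma amb_gen (k : ℤ) (A : SL(2, ℤ)) :
    ((!![1, 0; k, -1] * A.1 * (!![1, 0; k, -1] : Matrix (Fin 2) (Fin 2) ℤ)⁻¹ = (A⁻¹).1) ∨
    (!![1, 0; k, -1] * A.1 * (!![1, 0; k, -1] : Matrix (Fin 2) (Fin 2) ℤ)⁻¹ = -(A⁻¹).1)) ↔
    A 1 1 = A 0 0 + k * A 0 1 := by
  rw [kk_inv, invBy_mat]
  constructor
  · rintro (h | h)
    · exact h
    · exfalso
      obtain ⟨a1, a2, a3, a4⟩ := sl_inv A
      rw [mat_ext] at h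
      simp only [Matrix.neg_apply] at h
      erw [a1, a2, a3, a4] at h
      simp only [Matrix.mul_apply, Fin.sum_univ_two] at h
      simp at h
      obtain ⟨h1, h2, h3, h4⟩ := h
      have hd := pd_det A
      have hb : A 0 1 = 0 := by
        show A.1 0 1 = 0
        omega
      rw [hb] at h1 hd
      have h5 : A 1 1 = - A 0 0 := by linarith
      rw [h5] at hd
      nlinarith [sq_nonneg (A 0 0)]
  · exact Or.inl

lemma amb1_iff (A : SL(2, ℤ)) : Amb1 A ↔ InvBy false A := by
  have := amb_gen 0 A
  exact this

lemma amb2_iff (A : SL(2, ℤ)) : Amb2 A ↔ InvBy true A := by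
  have := amb_gen 1 A
  exact this

lemma invBy_neg (i : Bool) (A : SL(2, ℤ)) (h : InvBy i A) : InvBy i (-A) := by
  unfold InvBy at *
  simp only [sl_neg]
  rw [h]; ring

lemma amb_iff (γ : PSL2Z) : (AmbFst γ ∨ AmbSnd γ) ↔ ∃ i A, QuotientGroup.mk A = γ ∧ InvBy i A := by
  simp only [AmbFst, AmbSnd, amb1_iff, amb2_iff]
  constructor
  · rintro (⟨A, h⟩ | ⟨A, h⟩)
    · exact ⟨false, A, h⟩
    · exact ⟨true, A, h⟩
  · rintro ⟨i, A, h⟩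
    cases i
    · left; exact ⟨A, h⟩
    · right; exact ⟨A, h⟩

lemma pd_arcosh (x s : ℝ) (hx : 1 ≤ x) (hs : 0 ≤ s) :
    2 * arcosh x ≤ s ↔ x ≤ Real.cosh (s / 2) := by
  have e : arcosh x = Real.arcosh x := rfl
  rw [e, ← Real.cosh_arcosh hx, Real.cosh_le_cosh, abs_of_nonneg (Real.arcosh_nonneg hx),
    abs_of_nonneg (by linarith), Real.cosh_arcosh hx]
  constructor <;> intro h <;> linarith

noncomputable def TT (s : ℝ) : ℕ := ⌊2 * Real.cosh (s / 2)⌋₊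

lemma transLen_iff (A : SL(2, ℤ)) (hA : 2 < |trc A|) (s : ℝ) (hs : 0 ≤ s) :
    TransLenLE (QuotientGroup.mk A) s ↔ |trc A| ≤ TT s := by
  have h1 : ∀ B : SL(2, ℤ), |trc B| = |trc A| →
      (2 * arcosh (((|Matrix.trace (B : Matrix (Fin 2) (Fin 2) ℤ)| : ℤ) : ℝ) / 2) ≤ s ↔
        |trc A| ≤ TT s) := by
    intro B hB
    rw [trc_eq, hB]
    have h2 : (2 : ℝ) < ((|trc A| : ℤ) : ℝ) := by exact_mod_cast hA
    rw [pd_arcosh _ _ (by linarith) hs]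
    obtain ⟨n, hn⟩ := Int.eq_ofNat_of_zero_le (abs_nonneg (trc A))
    rw [hn, TT]
    have hc : (0 : ℝ) ≤ 2 * Real.cosh (s / 2) := by have := Real.cosh_pos (s / 2); linarith
    have : ((n : ℤ) ≤ (⌊2 * Real.cosh (s / 2)⌋₊ : ℤ)) ↔ n ≤ ⌊2 * Real.cosh (s / 2)⌋₊ := by
      exact_mod_cast Iff.rfl
    rw [this, Nat.le_floor_iff hc]
    push_cast
    constructor <;> intro h <;> linarith
  constructor
  · rintro ⟨B, hB, hs⟩
    refine (h1 B ?_).1 hs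
    rcases (mk_eq _ _).1 hB with h | h
    · rw [h]
    · rw [h, trc_neg, abs_neg]
  · intro h
    exact ⟨A, rfl, (h1 A rfl).2 h⟩

lemma NAmb_image (s : ℝ) (hs : 0 ≤ s) :
    {C : ConjClasses PSL2Z | ∃ γ : PSL2Z, ConjClasses.mk γ = C ∧
      IsPrim γ ∧ IsHyp γ ∧ TransLenLE γ s ∧
      ∃ δ : PSL2Z, IsConj γ δ ∧ (AmbFst δ ∨ AmbSnd δ)} =
    (fun p : Bool × SL(2, ℤ) => ConjClasses.mk (QuotientGroup.mk p.2 : PSL2Z)) '' Pset (TT s) := by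
  ext C
  constructor
  · rintro ⟨γ, rfl, hprim, ⟨A, rfl, hA⟩, htl, δ, hconj, hamb⟩
    rw [trc_eq] at hA
    rw [transLen_iff A hA s hs] at htl
    obtain ⟨i, B, rfl, hB⟩ := (amb_iff δ).1 hamb
    obtain ⟨g, hg⟩ := isConj_mk A B hconj
    have htr : |trc B| = |trc A| := by
      rw [← trc_conj g A]
      rcases hg with h | h
      · rw [h]
      · rw [h, trc_neg, abs_neg]
    have hpB := isPrim_conj hconj hprim
    have hcl : ConjClasses.mk (QuotientGroup.mk A : PSL2Z) = ConjClasses.mk (QuotientGroup.mk B) :=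
      ConjClasses.mk_eq_mk_iff_isConj.2 hconj
    rw [hcl]
    rw [← htr] at hA htl
    rcases abs_cases (trc B) with ⟨h1, h2⟩ | ⟨h1, h2⟩
    · exact ⟨(i, B), ⟨⟨hB, by show 3 ≤ trc B; omega, by rw [← h1]; exact htl⟩, hpB⟩, rfl⟩
    · have : (QuotientGroup.mk (-B) : PSL2Z) = QuotientGroup.mk B := by
        rw [mk_eq]; right; simp
      rw [← this]
      refine ⟨(i, -B), ⟨⟨invBy_neg _ _ hB, ?_, ?_⟩, by rw [this]; exact hpB⟩, rfl⟩
      · show 3 ≤ trc (-B)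
        rw [trc_neg]; omega
      · show trc (-B) ≤ _
        rw [trc_neg, ← h1]; exact htl
  · rintro ⟨⟨i, A⟩, ⟨⟨h1, h2, h3⟩, h4⟩, rfl⟩
    dsimp only at h1 h2 h3 h4 ⊢
    have habs : |trc A| = trc A := abs_of_nonneg (by omega)
    have hlt : 2 < |trc A| := by omega
    refine ⟨QuotientGroup.mk A, rfl, h4, ⟨A, rfl, by rw [trc_eq]; exact hlt⟩, ?_,
      QuotientGroup.mk A, IsConj.refl _, (amb_iff _).2 ⟨i, A, rfl, h1⟩⟩
    rw [transLen_iff A hlt s hs, habs]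
    exact h3

lemma ncard_fibers {α β : Type*} (s : Set α) (hs : s.Finite) (f : α → β) (n : ℕ)
    (h : ∀ a ∈ s, {b | b ∈ s ∧ f b = f a}.ncard = n) : s.ncard = n * (f '' s).ncard := by
  classical
  lift s to Finset α using hs
  rw [← Finset.coe_image, Set.ncard_coe_finset, Set.ncard_coe_finset,
    Finset.card_eq_sum_card_image f s, Finset.sum_const_nat (m := n), mul_comm]
  intro x hx
  obtain ⟨a, ha, rfl⟩ := Finset.mem_image.1 hx
  rw [← h a ha, ← Set.ncard_coe_finset]
  congr 1
  ext b
  simp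

lemma NAmb_eq (s : ℝ) (hs : 0 ≤ s) (hfin : (Pset (TT s)).Finite) :
    (Pset (TT s)).ncard = 4 * NAmb s := by
  rw [NAmb, NAmb_image s hs]
  apply ncard_fibers _ hfin
  rintro ⟨i, A⟩ ⟨⟨h1, h2, h3⟩, h4⟩
  rw [← pd_fiber i A h2 h4 h1]
  congr 1
  ext ⟨j, B⟩
  dsimp only at h1 h2 h3 h4
  simp only [Set.mem_ofPred_eq, Pset]
  constructor
  · rintro ⟨⟨⟨a1, a2, a3⟩, a4⟩, a5⟩
    refine ⟨a1, ?_⟩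
    obtain ⟨g, hg⟩ := isConj_mk A B (ConjClasses.mk_eq_mk_iff_isConj.1 a5).symm
    rcases hg with hg | hg
    · exact ⟨g, hg⟩
    · exfalso
      have := trc_conj g A
      rw [hg, trc_neg] at this
      omega
  · rintro ⟨a1, g, rfl⟩
    have hc := mk_isConj A g
    refine ⟨⟨⟨a1, ?_, ?_⟩, isPrim_conj hc h4⟩, ConjClasses.mk_eq_mk_iff_isConj.2 hc.symm⟩
    · rw [trc_conj]; exact h2
    · rw [trc_conj]; exact h3

def Sset (k X : ℤ) : Set (ℤ × ℤ × ℤ) :=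
  {v | v.1 * v.2.1 = v.2.2 ^ 2 - k ∧ k ∣ v.2.1 - v.1 ∧ k + 1 < 2 * v.2.2 ∧ v.2.2 ≤ X}

def Bset (k X : ℤ) : Set (ℤ × ℤ) :=
  {v | 0 < v.1 ∧ v.1 < v.2 ∧ k * v.1 ∣ v.2 ^ 2 - v.1 ^ 2 - k ∧ k + 1 < 2 * v.2 ∧ v.2 ≤ X}

def fS (k : ℤ) (p : (Bool × Bool) × (ℤ × ℤ)) : ℤ × ℤ × ℤ :=
  let b := p.2.1
  let c := (p.2.2 ^ 2 - k) / p.2.1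
  let e : ℤ := if p.1.1 then 1 else -1
  (e * (if p.1.2 then b else c), e * (if p.1.2 then c else b), p.2.2)

lemma Bset_c (k X b t : ℤ) (h : (b, t) ∈ Bset k X) :
    ∃ c, (t ^ 2 - k) / b = c ∧ b * c = t ^ 2 - k ∧ b < c ∧ k ∣ c - b ∧ 0 < b := by
  obtain ⟨h1, h2, h3, h4, h5⟩ := h
  dsimp only at *
  obtain ⟨q, hq⟩ := h3
  have e : t ^ 2 - k = b * (b + k * q) := by linarith
  refine ⟨b + k * q, ?_, e.symm, ?_, ⟨q, by ring⟩, h1⟩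
  · rw [e, Int.mul_ediv_cancel_left _ h1.ne']
  · by_contra hcon
    push Not at hcon
    nlinarith

lemma Sset_image (k X : ℤ) (hk : 0 < k) : Sset k X = fS k '' (Set.univ ×ˢ Bset k X) := by
  ext ⟨x, y, t⟩
  constructor
  · rintro ⟨h1, h2, h3, h4⟩
    dsimp only at *
    have ht : 0 < t := by linarith
    have hpos : 0 < x * y := by
      rw [h1]
      nlinarith
    have main : ∀ b c : ℤ, 0 < b → b < c → b * c = t ^ 2 - k → k ∣ c - b →
        (b, t) ∈ Bset k X ∧ (t ^ 2 - k) / b = c := by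
      intro b c hb hbc hprod hdvd
      refine ⟨⟨hb, ?_, ?_, h3, h4⟩, ?_⟩
      · dsimp only
        by_contra hcon
        push Not at hcon
        nlinarith
      · dsimp only
        have : t ^ 2 - b ^ 2 - k = (c - b) * b := by linarith
        rw [this]
        exact mul_dvd_mul_right hdvd b
      · rw [← hprod, Int.mul_ediv_cancel_left _ hb.ne']
    have hne : x ≠ y := by
      rintro rfl
      rcases le_or_gt t x with h | h
      · nlinarith
      · rcases le_or_gt t (-x) with h' | h'
        · nlinarith
        · have : x ^ 2 ≤ (t - 1) ^ 2 := sq_le_sq' (by linarith) (by linarith)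
          nlinarith
    have hdvd' : k ∣ x - y := by rw [← neg_sub]; exact h2.neg_right
    rcases lt_trichotomy x 0 with hx | hx | hx
    · have hy : y < 0 := by by_contra hcon; push Not at hcon; nlinarith
      rcases lt_or_gt_of_ne hne with hxy | hxy
      · obtain ⟨m1, m2⟩ := main (-y) (-x) (by linarith) (by linarith) (by linarith)
          (by rw [show -x - -y = y - x by ring]; exact h2)
        exact ⟨((false, false), (-y, t)), ⟨trivial, m1⟩, by simp only [fS, m2]; simp⟩
      · obtain ⟨m1, m2⟩ := main (-x) (-y) (by linarith) (by linarith) (by linarith)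
          (by rw [show -y - -x = x - y by ring]; exact hdvd')
        exact ⟨((false, true), (-x, t)), ⟨trivial, m1⟩, by simp only [fS, m2]; simp⟩
    · rw [hx] at hpos; simp at hpos
    · have hy : 0 < y := by by_contra hcon; push Not at hcon; nlinarith
      rcases lt_or_gt_of_ne hne with hxy | hxy
      · obtain ⟨m1, m2⟩ := main x y hx hxy h1 h2
        exact ⟨((true, true), (x, t)), ⟨trivial, m1⟩, by simp only [fS, m2]; simp⟩
      · obtain ⟨m1, m2⟩ := main y x hy hxy (by linarith) hdvd'
        exact ⟨((true, false), (y, t)), ⟨trivial, m1⟩, by simp only [fS, m2]; simp⟩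
  · rintro ⟨⟨⟨e, σ⟩, b, t⟩, ⟨-, hb⟩, he⟩
    obtain ⟨c, hc, hprod, hbc, hdvd, hb0⟩ := Bset_c k X b t hb
    obtain ⟨-, -, -, i4, i5⟩ := hb
    simp only [fS, hc] at he
    have hdvd' : k ∣ b - c := by rw [← neg_sub]; exact hdvd.neg_right
    cases e <;> cases σ <;> simp at he <;> obtain ⟨rfl, rfl, rfl⟩ := he <;>
      refine ⟨?_, ?_, i4, i5⟩ <;> dsimp only <;> first | linarith | skip
    · rw [show -b - -c = c - b by ring]; exact hdvd
    · rw [show -c - -b = b - c by ring]; exact hdvd'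
    · exact hdvd'
    · exact hdvd

lemma Sset_card (k X : ℤ) (hk : 0 < k) : (Sset k X).ncard = 4 * (Bset k X).ncard := by
  have h1 := Sset_image k X hk
  have h2 : Set.InjOn (fS k) (Set.univ ×ˢ Bset k X) := by
    rintro ⟨⟨e, σ⟩, b, t⟩ ⟨-, hb⟩ ⟨⟨e', σ'⟩, b', t'⟩ ⟨-, hb'⟩ he
    obtain ⟨c, hc, hprod, hbc, hdvd, hb0⟩ := Bset_c k X b t hb
    obtain ⟨c', hc', hprod', hbc', hdvd', hb0'⟩ := Bset_c k X b' t' hb'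
    simp only [fS, hc, hc'] at he
    clear hdvd hdvd' hprod hprod' hc hc' hb hb'
    cases e <;> cases e' <;> cases σ <;> cases σ' <;> simp at he ⊢ <;> omega
  rw [h1, Set.InjOn.ncard_image h2, Set.ncard_prod]
  simp [Set.ncard_univ]

lemma Bset_fin (k X : ℤ) : (Bset k X).Finite := by
  apply Set.Finite.subset ((Set.finite_Icc (0 : ℤ) X).prod (Set.finite_Icc (0 : ℤ) X))
  rintro ⟨b, t⟩ ⟨h1, h2, h3, h4, h5⟩
  dsimp only at *
  exact ⟨⟨by dsimp only; omega, by dsimp only; omega⟩, ⟨by dsimp only; omega, by dsimp only; omega⟩⟩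

lemma Bset1 (X : ℕ) : (Bset 1 X).ncard = (pairs1 X).card := by
  have h : Bset 1 X = (fun p : ℕ × ℕ => ((p.1 : ℤ), (p.2 : ℤ))) '' (pairs1 X : Set (ℕ × ℕ)) := by
    ext ⟨b, t⟩
    simp only [Set.mem_image, Finset.mem_coe, pairs1, Finset.mem_filter, Finset.mem_product,
      Finset.mem_Icc]
    constructor
    · rintro ⟨h1, h2, h3, h4, h5⟩
      dsimp only at *
      lift b to ℕ using h1.le
      lift t to ℕ using by omega
      refine ⟨(b, t), ⟨⟨⟨by dsimp only; omega, by dsimp only; omega⟩,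
        ⟨by dsimp only; omega, by dsimp only; omega⟩⟩, by dsimp only; omega, ?_⟩, rfl⟩
      dsimp only
      rw [one_mul] at h3
      have : (t : ℤ) ^ 2 - 1 = (t ^ 2 - b ^ 2 - 1) + b * b := by ring
      rw [this]
      exact dvd_add h3 (dvd_mul_right _ _)
    · rintro ⟨⟨b, t⟩, ⟨⟨⟨h1, h2⟩, h3, h4⟩, h5, h6⟩, he⟩
      simp only [Prod.mk.injEq] at he
      obtain ⟨rfl, rfl⟩ := he
      dsimp only at *
      refine ⟨by dsimp only; omega, by dsimp only; omega, ?_, by dsimp only; omega, by dsimp only; omega⟩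
      dsimp only
      rw [one_mul]
      have : (t : ℤ) ^ 2 - b ^ 2 - 1 = (t ^ 2 - 1) - b * b := by ring
      rw [this]
      exact dvd_sub h6 (dvd_mul_right _ _)
  rw [h, Set.ncard_image_of_injective, Set.ncard_coe_finset]
  rintro ⟨a, b⟩ ⟨c, d⟩ h
  simpa using h

lemma Bset4 (X : ℕ) : (Bset 4 X).ncard = (pairs2 X).card := by
  have h : Bset 4 X = (fun p : ℕ × ℕ => ((p.1 : ℤ), (p.2 : ℤ))) '' (pairs2 X : Set (ℕ × ℕ)) := by
    ext ⟨b, t⟩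
    simp only [Set.mem_image, Finset.mem_coe, pairs2, Finset.mem_filter, Finset.mem_product,
      Finset.mem_Icc]
    constructor
    · rintro ⟨h1, h2, h3, h4, h5⟩
      dsimp only at *
      lift b to ℕ using h1.le
      lift t to ℕ using by omega
      exact ⟨(b, t), ⟨⟨⟨by dsimp only; omega, by dsimp only; omega⟩,
        ⟨by dsimp only; omega, by dsimp only; omega⟩⟩, by dsimp only; omega, h3⟩, rfl⟩
    · rintro ⟨⟨b, t⟩, ⟨⟨⟨h1, h2⟩, h3, h4⟩, h5, h6⟩, he⟩
      simp only [Prod.mk.injEq] at he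
      obtain ⟨rfl, rfl⟩ := he
      dsimp only at *
      refine ⟨by dsimp only; omega, by dsimp only; omega, h6, ?_, by dsimp only; omega⟩
      dsimp only
      by_contra hcon
      have : t = 2 := by omega
      subst this
      have : b = 1 := by omega
      subst this
      norm_num at h6
  rw [h, Set.ncard_image_of_injective, Set.ncard_coe_finset]
  rintro ⟨a, b⟩ ⟨c, d⟩ h
  simpa using h

def Qset (T : ℕ) : Set (Bool × SL(2, ℤ)) :=
  {p | InvBy p.1 p.2 ∧ 3 ≤ trc p.2 ∧ trc p.2 ≤ T}

lemma Sset_fin (k X : ℤ) (hk : 0 < k) : (Sset k X).Finite := by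
  rw [Sset_image k X hk]
  exact (Set.finite_univ.prod (Bset_fin k X)).image _

lemma Qf_image (T : ℕ) : (fun A : SL(2, ℤ) => (A 0 1, A 1 0, A 0 0)) ''
    {A | (false, A) ∈ Qset T} = Sset 1 ((T / 2 : ℕ) : ℤ) := by
  ext ⟨x, y, t⟩
  constructor
  · rintro ⟨A, ⟨h1, h2, h3⟩, he⟩
    simp only [Prod.mk.injEq] at he
    obtain ⟨rfl, rfl, rfl⟩ := he
    have hd := pd_det A
    simp only [InvBy, kk, trc] at h1 h2 h3
    have h1' : A 1 1 = A 0 0 := by simpa using h1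
    rw [h1'] at hd h2 h3
    refine ⟨?_, one_dvd _, ?_, ?_⟩ <;> dsimp only
    · linarith
    · omega
    · omega
  · rintro ⟨h1, -, h2, h3⟩
    dsimp only at h1 h2 h3
    refine ⟨⟨!![t, x; y, t], by rw [Matrix.det_fin_two_of]; linarith⟩, ⟨?_, ?_, ?_⟩, rfl⟩
    · simp [InvBy, kk]
    · simp [trc]; omega
    · simp [trc]; omega

lemma Qf_inj (T : ℕ) : Set.InjOn (fun A : SL(2, ℤ) => (A 0 1, A 1 0, A 0 0))
    {A | (false, A) ∈ Qset T} := by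
  rintro A ⟨h1, h2, h3⟩ B ⟨k1, k2, k3⟩ he
  simp only [Prod.mk.injEq] at he
  obtain ⟨e1, e2, e3⟩ := he
  simp only [InvBy, kk] at h1 k1
  rw [sl_ext]
  refine ⟨e3, e1, e2, ?_⟩
  rw [h1, k1, e3]; simp

lemma Qt_image (T : ℕ) : (fun A : SL(2, ℤ) => (A 0 1, A 0 1 + 4 * A 1 0, trc A)) ''
    {A | (true, A) ∈ Qset T} = Sset 4 (T : ℤ) := by
  ext ⟨x, y, t⟩
  constructor
  · rintro ⟨A, ⟨h1, h2, h3⟩, he⟩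
    simp only [Prod.mk.injEq] at he
    obtain ⟨rfl, rfl, rfl⟩ := he
    have hd := pd_det A
    simp only [InvBy, kk, trc] at h1 h2 h3
    have h1' : A 1 1 = A 0 0 + A 0 1 := by simpa using h1
    refine ⟨?_, ⟨A 1 0, by ring⟩, ?_, ?_⟩ <;> dsimp only [trc]
    · rw [h1'] at hd ⊢
      linear_combination (-4) * hd
    · omega
    · omega
  · rintro ⟨h1, ⟨c, hc⟩, h2, h3⟩
    dsimp only at h1 h2 h3 hc
    obtain rfl : y = x + 4 * c := by linarith
    have hpar : ∃ a, t = x + 2 * a := by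
      have hev : Even (t ^ 2 - x ^ 2) := ⟨2 * x * c + 2, by linarith⟩
      have : Even (t - x) := by
        rw [Int.even_sub, Int.even_pow' two_ne_zero, Int.even_pow' two_ne_zero] at hev
        rwa [Int.even_sub]
      obtain ⟨a, ha⟩ := this
      exact ⟨a, by linarith⟩
    obtain ⟨a, rfl⟩ := hpar
    refine ⟨⟨!![a, x; c, a + x], by rw [Matrix.det_fin_two_of]; linarith⟩, ⟨?_, ?_, ?_⟩, ?_⟩
    · simp [InvBy, kk]
    · simp [trc]; omega
    · simp [trc]; omega
    · simp [trc]; ring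

lemma Qt_inj (T : ℕ) : Set.InjOn (fun A : SL(2, ℤ) => (A 0 1, A 0 1 + 4 * A 1 0, trc A))
    {A | (true, A) ∈ Qset T} := by
  rintro A ⟨h1, h2, h3⟩ B ⟨k1, k2, k3⟩ he
  simp only [Prod.mk.injEq] at he
  obtain ⟨e1, e2, e3⟩ := he
  simp only [InvBy, kk, trc] at h1 k1 e3
  simp at h1 k1
  rw [sl_ext]
  omega

lemma Qset_split (T : ℕ) : Qset T = (Prod.mk false '' {A | (false, A) ∈ Qset T}) ∪
    (Prod.mk true '' {A | (true, A) ∈ Qset T}) := by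
  ext ⟨i, A⟩
  cases i <;> simp

lemma Qfin_f (T : ℕ) : {A | (false, A) ∈ Qset T}.Finite := by
  apply Set.Finite.of_finite_image _ (Qf_inj T)
  rw [Qf_image]; exact Sset_fin _ _ one_pos

lemma Qfin_t (T : ℕ) : {A | (true, A) ∈ Qset T}.Finite := by
  apply Set.Finite.of_finite_image _ (Qt_inj T)
  rw [Qt_image]; exact Sset_fin _ _ (by norm_num)

lemma Qset_fin (T : ℕ) : (Qset T).Finite := by
  rw [Qset_split]
  exact ((Qfin_f T).image _).union ((Qfin_t T).image _)

lemma Qset_card (T : ℕ) : (Qset T).ncard = 4 * (pairs1 (T / 2)).card + 4 * (pairs2 T).card := by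
  rw [Qset_split, Set.ncard_union_eq _ ((Qfin_f T).image _) ((Qfin_t T).image _),
    Set.ncard_image_of_injective _ (Prod.mk_right_injective _),
    Set.ncard_image_of_injective _ (Prod.mk_right_injective _),
    ← Set.InjOn.ncard_image (Qf_inj T), ← Set.InjOn.ncard_image (Qt_inj T), Qf_image, Qt_image,
    Sset_card _ _ one_pos, Sset_card _ _ (by norm_num), Bset1, Bset4]
  rw [Set.disjoint_left]
  rintro ⟨i, A⟩ ⟨B, -, h⟩ ⟨C, -, h'⟩
  simp at h h'
  rw [h'.1] at h
  simp at h

lemma Qset_bound (T : ℕ) : (Qset T).ncard ≤ 8 * T ^ 2 := by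
  rw [Qset_card]
  have h1 : (pairs1 (T / 2)).card ≤ (T / 2) * (T / 2) := by
    apply (Finset.card_filter_le _ _).trans
    simp
  have h2 : (pairs2 T).card ≤ T * T := by
    apply (Finset.card_filter_le _ _).trans
    simp
  have h3 : (T / 2) * (T / 2) ≤ T * T := Nat.mul_le_mul (Nat.div_le_self _ _) (Nat.div_le_self _ _)
  nlinarith

lemma trc_rec (B C : SL(2, ℤ)) : trc (B * (B * C)) = trc B * trc (B * C) - trc C := by
  have hd := pd_det B
  obtain ⟨a1, a2, a3, a4⟩ := sl_mul B (B * C)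
  obtain ⟨b1, b2, b3, b4⟩ := sl_mul B C
  simp only [trc]
  rw [a1, a4, b1, b2, b3, b4]
  linear_combination (-(C 0 0 + C 1 1)) * hd

lemma trc_pow (B : SL(2, ℤ)) (hB : 3 ≤ trc B) (n : ℕ) :
    2 ^ n ≤ trc (B ^ n) ∧ trc (B ^ n) ≤ trc (B ^ (n + 1)) ∧ 2 ^ (n + 1) ≤ trc (B ^ (n + 1)) := by
  induction n with
  | zero =>
    have : trc (1 : SL(2, ℤ)) = 2 := by simp [trc]
    simp only [pow_zero, zero_add, pow_one, this]
    omega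
  | succ n ih =>
    obtain ⟨h1, h2, h3⟩ := ih
    have h := trc_rec B (B ^ n)
    rw [← pow_succ', ← pow_succ'] at h
    have hp : (0 : ℤ) < 2 ^ n := by positivity
    refine ⟨h3, ?_, ?_⟩
    · rw [h]; nlinarith
    · rw [h, pow_succ]; nlinarith

lemma trc_pow_two (B : SL(2, ℤ)) (hB : 3 ≤ trc B) (n : ℕ) (hn : 2 ≤ n) :
    trc B ^ 2 - 2 ≤ trc (B ^ n) := by
  induction n, hn using Nat.le_induction with
  | base =>
    have h := trc_rec B 1
    have : trc (1 : SL(2, ℤ)) = 2 := by simp [trc]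
    rw [mul_one, this] at h
    rw [pow_two B, h]; linarith
  | succ n hn ih => exact ih.trans (trc_pow B hB n).2.1

lemma nonprim_root (A : SL(2, ℤ)) (hA : 3 ≤ trc A) (h : ¬ IsPrim (QuotientGroup.mk A)) :
    ∃ (B : SL(2, ℤ)) (n : ℕ), 2 ≤ n ∧ 3 ≤ trc B ∧ A = B ^ n := by
  unfold IsPrim at h
  rw [not_not] at h
  obtain ⟨δ, n, hn, hδ⟩ := h
  obtain ⟨B, rfl⟩ := QuotientGroup.mk_surjective δ
  have h1 : A = B ^ n ∨ A = -(B ^ n) := (mk_eq (B ^ n) A).1 hδ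
  have hcomm : A * B = B * A := by
    have : B ^ n * B = B * B ^ n := by rw [← pow_succ, ← pow_succ']
    rcases h1 with h1 | h1 <;> rw [h1]
    · exact this
    · rw [neg_mul, mul_neg, this]
  obtain ⟨c1, c2⟩ := pd_comm A B hcomm
  have hb := pd_b_ne A hA
  have hdA := pd_det A
  have hdB := pd_det B
  have hB2 : 3 ≤ trc B ∨ trc B ≤ -3 := by
    have key : (B 0 1) ^ 2 * (trc A ^ 2 - 4) = (A 0 1) ^ 2 * (trc B ^ 2 - 4) := by
      have i1 : (B 0 1) ^ 2 * (trc A ^ 2 - 4)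
          = (B 0 1 * (A 0 0 - A 1 1)) ^ 2 + 4 * (B 0 1 * A 0 1) * (B 0 1 * A 1 0) := by
        unfold trc
        linear_combination (4 * (B 0 1) ^ 2) * hdA
      have i2 : (A 0 1) ^ 2 * (trc B ^ 2 - 4)
          = (A 0 1 * (B 0 0 - B 1 1)) ^ 2 + 4 * (B 0 1 * A 0 1) * (A 0 1 * B 1 0) := by
        unfold trc
        linear_combination (4 * (A 0 1) ^ 2) * hdB
      rw [i1, i2, c1, c2]
    have hB01 : B 0 1 ≠ 0 := by
      intro h0
      rw [h0] at c1 c2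
      have h6 : B 1 0 = 0 := by
        rcases mul_eq_zero.1 (show A 0 1 * B 1 0 = 0 by linarith) with h | h
        · exact absurd h hb
        · exact h
      have h7 : B 0 0 - B 1 1 = 0 := by
        rcases mul_eq_zero.1 (show A 0 1 * (B 0 0 - B 1 1) = 0 by linarith) with h | h
        · exact absurd h hb
        · exact h
      have h8 : ∀ m, (B ^ m) 0 1 = 0 := by
        intro m
        induction m with
        | zero => simp
        | succ m ih =>
          rw [pow_succ', (sl_mul B (B ^ m)).2.1, h0, ih]; ring
      apply hb
      rcases h1 with h1 | h1 <;> rw [h1]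
      · exact h8 n
      · have := h8 n
        simp only [sl_neg, this]; norm_num
    have p1 : 0 < (B 0 1) ^ 2 := by positivity
    have p2 : 0 < (A 0 1) ^ 2 := by positivity
    have p3 : 0 < trc A ^ 2 - 4 := by nlinarith
    have p4 : 0 < trc B ^ 2 - 4 := by
      by_contra hcon
      push Not at hcon
      nlinarith [mul_pos p1 p3]
    by_contra hcon
    push Not at hcon
    nlinarith
  have hfin : ∀ C : SL(2, ℤ), 3 ≤ trc C → (A = C ^ n ∨ A = -(C ^ n)) →
      ∃ (B : SL(2, ℤ)) (n : ℕ), 2 ≤ n ∧ 3 ≤ trc B ∧ A = B ^ n := by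
    intro C hC h
    rcases h with h | h
    · exact ⟨C, n, hn, hC, h⟩
    · exfalso
      rw [h, trc_neg] at hA
      have := (trc_pow C hC n).1
      have hp : (0 : ℤ) < 2 ^ n := by positivity
      linarith
  rcases hB2 with h3 | h3
  · exact hfin B h3 h1
  · apply hfin (-B) (by rw [trc_neg]; linarith)
    rcases Nat.even_or_odd n with he | ho
    · rw [he.neg_pow]; exact h1
    · rw [ho.neg_pow, neg_neg]; exact h1.symm

lemma nonprim_sub (T : ℕ) : Qset T \ Pset T ⊆
    (fun q : (Bool × SL(2, ℤ)) × ℕ => (q.1.1, q.1.2 ^ q.2)) ''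
      (Qset (Nat.sqrt (T + 2)) ×ˢ (Set.Icc 2 (Nat.log 2 T))) := by
  rintro ⟨i, A⟩ ⟨⟨h1, h2, h3⟩, h4⟩
  have hnp : ¬ IsPrim (QuotientGroup.mk A) := fun h => h4 ⟨⟨h1, h2, h3⟩, h⟩
  dsimp only at h1 h2 h3
  obtain ⟨B, n, hn, hB, rfl⟩ := nonprim_root A h2 hnp
  have hcomm : B ^ n * B = B * B ^ n := by rw [← pow_succ, ← pow_succ']
  obtain ⟨c1, c2⟩ := pd_comm (B ^ n) B hcomm
  have hb := pd_b_ne (B ^ n) h2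
  have q1 := (trc_pow B hB n).1
  have q2 := trc_pow_two B hB n hn
  have hT : T ≠ 0 := by rintro rfl; simp at h3; omega
  refine ⟨((i, B), n), ⟨⟨?_, hB, ?_⟩, hn, ?_⟩, rfl⟩
  · unfold InvBy at h1 ⊢
    dsimp only
    apply mul_left_cancel₀ hb
    linear_combination c2 + B 0 1 * h1
  · dsimp only
    lift trc B to ℕ using by omega with t ht
    have : t ≤ Nat.sqrt (T + 2) := by
      rw [Nat.le_sqrt]
      have : (t : ℤ) * t ≤ T + 2 := by nlinarith
      exact_mod_cast this
    exact_mod_cast this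
  · apply Nat.le_log_of_pow_le (by norm_num)
    have : (2 : ℤ) ^ n ≤ T := by linarith
    exact_mod_cast this

lemma Pset_sub (T : ℕ) : Pset T ⊆ Qset T := fun _ h => h.1

lemma nonprim_card (T : ℕ) : (Qset T \ Pset T).ncard ≤ 8 * (T + 2) * Nat.log 2 T := by
  have hf : (Qset (Nat.sqrt (T + 2)) ×ˢ (Set.Icc 2 (Nat.log 2 T))).Finite :=
    (Qset_fin _).prod (Set.finite_Icc _ _)
  have h1 := Set.ncard_le_ncard (nonprim_sub T) (hf.image _)
  have h2 := Set.ncard_image_le (f := fun q : (Bool × SL(2, ℤ)) × ℕ => (q.1.1, q.1.2 ^ q.2)) hf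
  rw [Set.ncard_prod] at h2
  have h3 := Qset_bound (Nat.sqrt (T + 2))
  have h4 : Nat.sqrt (T + 2) ^ 2 ≤ T + 2 := Nat.sqrt_le' _
  have h5 : (Set.Icc 2 (Nat.log 2 T)).ncard ≤ Nat.log 2 T := by
    rw [← Finset.coe_Icc, Set.ncard_coe_finset, Nat.card_Icc]; omega
  exact (h1.trans h2).trans (Nat.mul_le_mul (h3.trans (by omega)) h5)

lemma NAmb_count (s : ℝ) (hs : 0 ≤ s) :
    ∃ e : ℕ, e ≤ 2 * (TT s + 2) * Nat.log 2 (TT s) ∧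
      NAmb s + e = (pairs1 (TT s / 2)).card + (pairs2 (TT s)).card := by
  have hfin := (Qset_fin (TT s)).subset (Pset_sub (TT s))
  have h1 := NAmb_eq s hs hfin
  have h2 := Set.ncard_sdiff_add_ncard_of_subset (Pset_sub (TT s)) (Qset_fin _)
  have h3 := nonprim_card (TT s)
  have h4 := Qset_card (TT s)
  rw [mul_assoc] at h3
  refine ⟨(pairs1 (TT s / 2)).card + (pairs2 (TT s)).card - NAmb s, ?_, ?_⟩
  · rw [mul_assoc]
    omega
  · omega

lemma TT_bounds (s : ℝ) (hs : 0 ≤ s) :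
    Real.exp (s / 2) - 1 ≤ TT s ∧ (TT s : ℝ) ≤ Real.exp (s / 2) + 1 := by
  have h0 : (0 : ℝ) ≤ 2 * Real.cosh (s / 2) := by have := Real.cosh_pos (s / 2); linarith
  have h1 := Nat.floor_le h0
  have h2 := Nat.lt_floor_add_one (2 * Real.cosh (s / 2))
  have e : 2 * Real.cosh (s / 2) = Real.exp (s / 2) + Real.exp (-(s / 2)) := by
    rw [Real.cosh_eq]; ring
  have p1 := Real.exp_pos (-(s / 2))
  have p2 : Real.exp (-(s / 2)) ≤ 1 := Real.exp_le_one_iff.2 (by linarith)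
  have e3 : (TT s : ℝ) = (⌊2 * Real.cosh (s / 2)⌋₊ : ℝ) := rfl
  rw [e3]
  constructor <;> linarith

lemma logT_bounds (s T : ℝ) (hE : 3 ≤ Real.exp (s / 2)) (h1 : Real.exp (s / 2) - 1 ≤ T)
    (h2 : T ≤ Real.exp (s / 2) + 1) :
    |Real.log T - s / 2| * Real.exp (s / 2) ≤ 2 ∧ |Real.log T - s / 2| ≤ 1 := by
  set E := Real.exp (s / 2) with hEd
  have hE0 : 0 < E := by linarith
  have hT0 : 0 < T := by linarith
  have hl : Real.log T - s / 2 = Real.log (T / E) := by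
    rw [Real.log_div hT0.ne' hE0.ne', hEd, Real.log_exp]
  have hq : 0 < T / E := by positivity
  have u1 := Real.log_le_sub_one_of_pos hq
  have u2 := Real.one_sub_inv_le_log_of_pos hq
  rw [← hl] at u1 u2
  have v1 : (Real.log T - s / 2) * E ≤ 1 := by
    have : (Real.log T - s / 2) * E ≤ (T / E - 1) * E := mul_le_mul_of_nonneg_right u1 hE0.le
    have e : (T / E - 1) * E = T - E := by field_simp
    linarith
  have v2 : -2 ≤ (Real.log T - s / 2) * E := by
    have : (1 - (T / E)⁻¹) * E ≤ (Real.log T - s / 2) * E := mul_le_mul_of_nonneg_right u2 hE0.le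
    have e : -2 ≤ (1 - (T / E)⁻¹) * E := by
      rw [inv_div]
      have : (1 - E / T) * E = (T - E) * E / T := by field_simp
      rw [this, le_div_iff₀ hT0]
      nlinarith
    linarith
  have w : |Real.log T - s / 2| * E ≤ 2 := by
    rw [← abs_of_pos hE0, ← abs_mul, abs_le]
    constructor <;> linarith
  refine ⟨w, ?_⟩
  by_contra hcon
  push Not at hcon
  nlinarith

lemma log2_bound (T : ℕ) (hT : 1 ≤ T) : (Nat.log 2 T : ℝ) ≤ 2 * Real.log T := by
  have h := Nat.pow_log_le_self 2 (by omega : T ≠ 0)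
  have h' : ((2 : ℝ) ^ Nat.log 2 T) ≤ T := by exact_mod_cast h
  have h2 := Real.log_le_log (by positivity) h'
  rw [Real.log_pow] at h2
  have := Real.log_two_gt_d9
  have hn : (0 : ℝ) ≤ Nat.log 2 T := by positivity
  nlinarith

lemma final_real (K c N P e T L x E ll : ℝ) (hK : 0 ≤ K) (hc : 0 ≤ c) (hc1 : c ≤ 1)
    (hx : 3 ≤ x) (hE : x + 1 ≤ E) (hN : N + e = P) (he0 : 0 ≤ e)
    (he : e ≤ 2 * (T + 2) * ll) (hll : ll ≤ 2 * L)
    (hP : |P - c * T * L ^ 2| ≤ K * (T * (1 + L)))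
    (hT1 : E - 1 ≤ T) (hT2 : T ≤ E + 1) (hL1 : |L - x| * E ≤ 2) (hL2 : |L - x| ≤ 1) :
    |N - c * (E * x ^ 2)| ≤ (4 * K + 24) * (x * E) := by
  have hL := abs_le.1 hL2
  have hTE : |T - E| ≤ 1 := abs_le.2 ⟨by linarith, by linarith⟩
  have hL0 : 0 ≤ L := by linarith
  have b1 : K * (T * (1 + L)) ≤ 4 * K * (x * E) := by
    have : T * (1 + L) ≤ (2 * E) * (2 * x) :=
      mul_le_mul (by linarith) (by linarith) (by linarith) (by linarith)
    nlinarith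
  have b2 : e ≤ 16 * (x * E) := by
    have h1 : 2 * (T + 2) * ll ≤ 2 * (T + 2) * (2 * L) :=
      mul_le_mul_of_nonneg_left hll (by linarith)
    have h2 : (T + 2) * L ≤ (2 * E) * (2 * x) :=
      mul_le_mul (by linarith) (by linarith) hL0 (by linarith)
    nlinarith
  have b3 : |T * L ^ 2 - E * x ^ 2| ≤ 8 * (x * E) := by
    have e1 : T * L ^ 2 - E * x ^ 2 = (T - E) * L ^ 2 + (L - x) * E * (L + x) := by ring
    rw [e1]
    have a1 : |(T - E) * L ^ 2| ≤ 1 * (x + 1) ^ 2 := by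
      rw [abs_mul, abs_of_nonneg (sq_nonneg L)]
      exact mul_le_mul hTE (by nlinarith) (sq_nonneg _) (by norm_num)
    have a2 : |(L - x) * E * (L + x)| ≤ 2 * (2 * x + 1) := by
      rw [abs_mul, abs_mul, abs_of_pos (show 0 < E by linarith),
        abs_of_nonneg (show 0 ≤ L + x by linarith)]
      exact mul_le_mul hL1 (by linarith) (by linarith) (by norm_num)
    have a3 := abs_add_le ((T - E) * L ^ 2) ((L - x) * E * (L + x))
    have a4 : (x + 1) ^ 2 ≤ 2 * x * E := by
      rw [pow_two]
      exact mul_le_mul (by linarith) hE (by linarith) (by linarith)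
    nlinarith
  have b4 : |c * (T * L ^ 2 - E * x ^ 2)| ≤ 8 * (x * E) := by
    rw [abs_mul, abs_of_nonneg hc]
    have := abs_nonneg (T * L ^ 2 - E * x ^ 2)
    nlinarith
  have h1 := abs_le.1 hP
  have h2 := abs_le.1 b4
  rw [abs_le]
  constructor <;> nlinarith

theorem ambiguous_main :
    (fun s : ℝ => (NAmb s : ℝ) - 3 / (4 * Real.pi ^ 2) * s ^ 2 * Real.exp (s / 2))
      =O[Filter.atTop] fun s : ℝ => s * Real.exp (s / 2) := by
  obtain ⟨K, hK, hmain⟩ := pc_main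
  apply Asymptotics.IsBigO.of_bound (2 * K + 12)
  filter_upwards [Filter.eventually_ge_atTop (16 : ℝ)] with s hs
  have hE : s / 2 + 1 ≤ Real.exp (s / 2) := Real.add_one_le_exp _
  obtain ⟨t1, t2⟩ := TT_bounds s (by linarith)
  have hT8 : 8 ≤ TT s := by
    have : (8 : ℝ) ≤ TT s := by linarith
    exact_mod_cast this
  obtain ⟨l1, l2⟩ := logT_bounds s (TT s) (by linarith) t1 t2
  obtain ⟨e, he, hN⟩ := NAmb_count s (by linarith)
  have hN' : (NAmb s : ℝ) + e = (pairs1 (TT s / 2)).card + (pairs2 (TT s)).card := by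
    exact_mod_cast hN
  have he' : (e : ℝ) ≤ 2 * (TT s + 2) * (Nat.log 2 (TT s) : ℕ) := by exact_mod_cast he
  have h := final_real K (3 / Real.pi ^ 2) (NAmb s) _ e (TT s) (Real.log (TT s)) (s / 2)
    (Real.exp (s / 2)) (Nat.log 2 (TT s) : ℕ) hK pc_pi.1.le pc_pi.2 (by linarith) hE hN'
    (by positivity) he' (log2_bound _ (by omega)) (hmain _ hT8) t1 t2 l1 l2
  rw [Real.norm_eq_abs, Real.norm_eq_abs, abs_of_nonneg (show 0 ≤ s * Real.exp (s / 2) by positivity)]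
  have e1 : 3 / (4 * Real.pi ^ 2) * s ^ 2 * Real.exp (s / 2)
      = 3 / Real.pi ^ 2 * (Real.exp (s / 2) * (s / 2) ^ 2) := by
    field_simp
    ring
  rw [e1]
  linarith

/-- Theorem 14, first claim: as `s → +∞`,
`𝒩_A(s) = (3/(4π²)) s² e^{s/2} + O(s e^{s/2})`. -/
theorem ambiguous_classes_asymptotic :
    (fun s : ℝ => (NAmb s : ℝ) - 3 / (4 * Real.pi ^ 2) * s ^ 2 * Real.exp (s / 2))
      =O[Filter.atTop] fun s : ℝ => s * Real.exp (s / 2) := by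
  exact ambiguous_main
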